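/- arXiv:1806.01382 — 6 statements merged into one kernel-verified Lean document; each statement's English description precedes it below -/
import Mathlib

section
/- Let d ≥ 3 be a fixed integer and p a prime with gcd(p,d) = 1. There exists 𝔟₀ > 0 such that for every 𝔟 ≥ 𝔟₀ there is a constant C > 0 with: for all n ≥ 2, (1/(nd)!) · Σ_{(n_0,…,n_{p−1}) ∈ 𝒩_𝔟(n)} Σ_{v ∈ F_p^n : Φ(v) = (n_0,…,n_{p−1})} #{ permutations 𝒫 of {1,…,n}×{1,…,d} : A(𝒫)·v ≡ 0 (mod p) } ≤ C / n^{d−2}, where 𝒩_𝔟(n) is the set of p-tuples (n_0,…,n_{p−1}) of nonnegative integers with Σ_j n_j = n which are neither equal to (n,0,…,0) nor satisfy Σ_{j=0}^{p−1} (n_j/n − 1/p)² ≤ 𝔟 ln n / n. -/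
/-!
Write `μ = c / n` for the normalized counting vector `c` of `v`. A permutation `P` with
`A(P) v = 0` colours the points of the configuration model by `x ↦ v (P x)`, with zero sum on every
fibre and with the colour `z` used `d c_z` times. Each such colouring (`colSet`) comes from at most
`∏ (d c_z)!` permutations, and there are at most `n! / ∏ c_z!` vectors of class `c`. Stirling's
formula, in which the square-root factors cancel up to constants (`factorial_ratio_le`), bounds the
normalized contribution of the class by a constant times `∏ μ_z ^ ((d - 1) c_z) · #colSet`.

The number of colourings is controlled by a Chernoff-type bound,
`#colSet · ∏ x_z ^ (d c_z) ≤ Q(x) ^ n` for all `x ≥ 0`, where `Q(x) = ∑ ∏ x_{a_i}` runs over the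
`d`-tuples `a` of sum zero (`card_colSet_mul_le`). It is used at two points.

* `x_z = μ_z ^ ((d - 1) / d)` cancels the entropy factor and leaves `Q(x) ^ n`. That `Q(x) ≤ 1` is
  an instance of Young's inequality: apply the arithmetic-geometric mean inequality to the numbers
  `∏_{l ≠ k} μ_{a_l}`, whose sum over `a` is `1` for each `k`. Keeping a remainder shows that a small
  deficit `1 - Q` makes `√μ` almost invariant under the reflections `s ↦ -s - ∑ b` with all `b_l` of
  substantial mass. Two different residues of substantial mass give two such reflections, whose
  composition is a translation generating `F_p`, so `μ` is nearly uniform; a mass concentrated at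
  one `s ≠ 0` is excluded because `d s ≠ 0`. Hence `1 - Q ≥ κ⁻¹ ∑ (μ_z - 1/p)²` away from the point
  mass at `0` (`stability`), and a class which is not equidistributed contributes `O(n ^ (-b / κ))`.
* Near the point mass at `0`, with `m` nonzero coordinates, take `x_0 = 1` and `x_z = √(m / n)`. As a
  nonzero tuple of sum zero has at least two nonzero entries, `Q(x) ≤ 1 + O(m / n)`, and the class
  contributes at most `(E (m / n) ^ ((d - 2) / 2)) ^ m` up to a constant
  (`entropy_mul_card_le_near`). For `m ≥ 2` this is `O(n ^ (-(d - 2)) 2 ^ (-m))`. The case `m = 1` does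
  not occur: since `p ∤ d` and the columns of `A(P)` sum to `d`, the coordinates of `v` sum to zero.

Summing over the classes gives a geometric series in the second regime, and at most `(n + 1) ^ p`
terms in the first one.
-/

/-- `phi a j` is the number of coordinates of the tuple `a` equal to `j`
(the `j`-th coordinate of the counting vector `Φ(a)`). -/
noncomputable def phi {p k : ℕ} (a : Fin k → ZMod p) (j : ZMod p) : ℕ :=
  Nat.card {i : Fin k // a i = j}

/-- The adjacency matrix of the `d`-regular directed multigraph on `n` vertices
associated to a permutation `P` of the `n·d` points of the configuration model:
`A(P)_{kℓ} = #{k' ∈ F_k : P(k') ∈ F_ℓ}`. -/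
noncomputable def adjMat (n d : ℕ) (P : Equiv.Perm (Fin n × Fin d)) :
    Matrix (Fin n) (Fin n) ℤ :=
  Matrix.of fun k l => (Nat.card {k' : Fin d // (P (k, k')).1 = l} : ℤ)

/-- `T_{d,p}`, the set of `d`-tuples over `F_p` summing to zero. -/
def Tset (d p : ℕ) [NeZero p] : Finset (Fin d → ZMod p) :=
  Finset.univ.filter (fun a => ∑ i, a i = 0)

namespace NonEquidist

open Finset

/-! ### Counting permutations with a prescribed colouring -/

lemma card_perm_comp_of_exists {α C : Type*} [Fintype α] [DecidableEq α] [DecidableEq C]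
    [Fintype C] (f w : α → C) (P₀ : Equiv.Perm α) (h : f ∘ P₀ = w) :
    Nat.card {P : Equiv.Perm α // f ∘ P = w} = ∏ c, (Nat.card {a // f a = c}).factorial := by
  have e : {P : Equiv.Perm α // f ∘ P = w} ≃ {g : Equiv.Perm α // f ∘ g = f} :=
    (Equiv.mulRight P₀⁻¹).subtypeEquiv (by
      intro P
      subst h
      simp only [Equiv.coe_mulRight, Equiv.Perm.coe_mul]
      constructor
      · intro h
        funext x
        have := congrFun h (P₀⁻¹ x)
        simpa using this
      · intro h
        funext x
        have := congrFun h (P₀ x)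
        simpa using this)
  rw [Nat.card_congr e, Nat.card_eq_fintype_card, DomMulAct.stabilizer_card]
  simp

lemma card_perm_comp_le {α C : Type*} [Fintype α] [DecidableEq α] [DecidableEq C]
    [Fintype C] (f w : α → C) :
    Nat.card {P : Equiv.Perm α // f ∘ P = w} ≤ ∏ c, (Nat.card {a // f a = c}).factorial := by
  by_cases h : ∃ P₀ : Equiv.Perm α, f ∘ P₀ = w
  · obtain ⟨P₀, h⟩ := h
    exact (card_perm_comp_of_exists f w P₀ h).le
  · have : IsEmpty {P : Equiv.Perm α // f ∘ P = w} := ⟨fun P => h ⟨P.1, P.2⟩⟩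
    simp

/-- The multinomial upper bound: the colourings with prescribed class sizes `k` are permuted
transitively, each with stabilizer of order `∏ (k c)!`. -/
lemma card_colourings_mul_le {α C : Type*} [Fintype α] [DecidableEq α] [DecidableEq C]
    [Fintype C] (k : C → ℕ) :
    Nat.card {v : α → C // ∀ c, Nat.card {a // v a = c} = k c} * ∏ c, (k c).factorial
      ≤ (Fintype.card α).factorial := by
  rcases isEmpty_or_nonempty {v : α → C // ∀ c, Nat.card {a // v a = c} = k c} with h | ⟨⟨v₀, h₀⟩⟩
  · rw [Nat.card_of_isEmpty, zero_mul]
    exact Nat.zero_le _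
  have key : ∀ v : {v : α → C // ∀ c, Nat.card {a // v a = c} = k c},
      Nat.card {P : Equiv.Perm α // v₀ ∘ P = v.1} = ∏ c, (k c).factorial := by
    rintro ⟨v, hv⟩
    let e : ∀ c, {a // v a = c} ≃ {a // v₀ a = c} := fun c =>
      Classical.choice (Finite.card_eq.1 ((hv c).trans (h₀ c).symm))
    rw [card_perm_comp_of_exists v₀ v (Equiv.ofFiberEquiv e)
      (funext fun a => Equiv.ofFiberEquiv_map e a)]
    exact Finset.prod_congr rfl fun c _ => by rw [h₀]
  calc _ = Nat.card (Σ v : {v : α → C // ∀ c, Nat.card {a // v a = c} = k c},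
        {P : Equiv.Perm α // v₀ ∘ P = v.1}) := by
        rw [Nat.card_sigma, Finset.sum_congr rfl fun v _ => key v]
        simp [Nat.card_eq_fintype_card]
    _ ≤ Nat.card (Equiv.Perm α) := by
        refine Nat.card_le_card_of_injective (fun x => x.2.1) ?_
        rintro ⟨⟨v, hv⟩, ⟨P, hP⟩⟩ ⟨⟨v', hv'⟩, ⟨P', hP'⟩⟩ h
        simp only at h hP hP'
        subst h
        subst hP
        subst hP'
        rfl
    _ = _ := by simp [Nat.card_eq_fintype_card, Fintype.card_perm]

/-- The colourings `w` of the points of the configuration model by `F_p` which sum to zero on each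
fibre and use the colour `z` exactly `d * c z` times. -/
def colSet (n d p : ℕ) [NeZero p] (c : ZMod p → ℕ) : Finset (Fin n → Fin d → ZMod p) :=
  univ.filter fun w => (∀ k, w k ∈ Tset d p) ∧
    ∀ z, #{x : Fin n × Fin d | w x.1 x.2 = z} = d * c z

lemma mulVec_apply_eq (n d p : ℕ) (P : Equiv.Perm (Fin n × Fin d)) (v : Fin n → ZMod p)
    (k : Fin n) :
    ((adjMat n d P).map (Int.cast : ℤ → ZMod p)).mulVec v k = ∑ i, v (P (k, i)).1 := by
  rw [← Finset.sum_fiberwise univ (fun i => (P (k, i)).1)]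
  simp only [Matrix.mulVec, dotProduct, adjMat, Matrix.map_apply, Matrix.of_apply]
  refine Finset.sum_congr rfl fun l _ => ?_
  rw [Finset.sum_congr rfl (g := fun _ => v l)]
  · simp [Nat.card_eq_fintype_card, Fintype.card_subtype]
  · intro i hi
    simp only [mem_filter] at hi
    rw [hi.2]

lemma card_fst_fiber (n d p : ℕ) [NeZero p] (v : Fin n → ZMod p) (z : ZMod p) :
    Nat.card {x : Fin n × Fin d // v x.1 = z} = d * phi v z := by
  have e : {x : Fin n × Fin d // v x.1 = z} ≃ {i : Fin n // v i = z} × Fin d :=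
    { toFun := fun x => (⟨x.1.1, x.2⟩, x.1.2)
      invFun := fun y => ⟨(y.1.1, y.2), y.1.2⟩
      left_inv := fun _ => rfl
      right_inv := fun _ => rfl }
  rw [Nat.card_congr e, Nat.card_prod, phi, mul_comm]
  simp

lemma card_kernel_perms_le (n d p : ℕ) [NeZero p] (v : Fin n → ZMod p) (c : ZMod p → ℕ)
    (hv : ∀ z, phi v z = c z) :
    Nat.card {P : Equiv.Perm (Fin n × Fin d) //
        ((adjMat n d P).map (Int.cast : ℤ → ZMod p)).mulVec v = 0}
      ≤ (∏ z, (d * c z).factorial) * #(colSet n d p c) := by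
  classical
  rw [Nat.card_eq_fintype_card, Fintype.card_subtype]
  refine Finset.card_le_mul_card_image_of_maps_to
    (f := fun P : Equiv.Perm (Fin n × Fin d) => fun k i => v (P (k, i)).1) ?_ _ ?_
  · intro P hP
    simp only [mem_filter, mem_univ, true_and] at hP
    simp only [colSet, mem_filter, mem_univ, true_and, Tset]
    refine ⟨fun k => ?_, fun z => ?_⟩
    · rw [← mulVec_apply_eq, hP]; rfl
    · rw [← hv z, ← card_fst_fiber, Nat.card_eq_fintype_card, Fintype.card_subtype]
      refine Finset.card_bij (fun x _ => P x) ?_ ?_ ?_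
      · intro x hx; simpa using hx
      · intro x _ y _ h; exact P.injective h
      · intro y hy; exact ⟨P.symm y, by simpa using hy, by simp⟩
  · intro w _
    calc _ ≤ Nat.card {P : Equiv.Perm (Fin n × Fin d) //
            (fun x : Fin n × Fin d => v x.1) ∘ P = fun x => w x.1 x.2} := by
          rw [Nat.card_eq_fintype_card, Fintype.card_subtype]
          refine Finset.card_le_card ?_
          intro P hP
          simp only [mem_filter, mem_univ, true_and] at hP ⊢
          funext x
          simp [← hP.2]
      _ ≤ _ := card_perm_comp_le _ _
      _ = _ := Finset.prod_congr rfl fun z _ => by rw [card_fst_fiber, hv]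

/-- The class of vectors with counting vector `c` contributes at most
`n! (∏ (d c_z)! / c_z!) · #colSet`. -/
lemma class_sum_mul_le (n d p : ℕ) [NeZero p] (c : ZMod p → ℕ) :
    (∑ v ∈ univ.filter (fun v : Fin n → ZMod p => ∀ z, phi v z = c z),
      Nat.card {P : Equiv.Perm (Fin n × Fin d) //
        ((adjMat n d P).map (Int.cast : ℤ → ZMod p)).mulVec v = 0}) * ∏ z, (c z).factorial
      ≤ n.factorial * ((∏ z, (d * c z).factorial) * #(colSet n d p c)) := by
  have h1 := card_colourings_mul_le (α := Fin n) (C := ZMod p) c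
  rw [Fintype.card_fin, Nat.card_eq_fintype_card, Fintype.card_subtype] at h1
  calc _ ≤ (#(univ.filter (fun v : Fin n → ZMod p => ∀ z, phi v z = c z)) *
          ((∏ z, (d * c z).factorial) * #(colSet n d p c))) * ∏ z, (c z).factorial := by
        gcongr
        rw [← smul_eq_mul]
        refine Finset.sum_le_card_nsmul _ _ _ fun v hv => card_kernel_perms_le n d p v c ?_
        simpa using hv
    _ = (#(univ.filter (fun v : Fin n → ZMod p => ∀ z, phi v z = c z)) * ∏ z, (c z).factorial) *
          ((∏ z, (d * c z).factorial) * #(colSet n d p c)) := by ring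
    _ ≤ _ := by gcongr; exact h1

/-- If some matrix kills a vector with counting vector `c`, then `∑ c_z z = 0`, because every column
of the matrix sums to `d`, which is invertible modulo `p`. -/
lemma sum_eq_zero_of_colSet_nonempty (n d p : ℕ) [Fact p.Prime] (hgcd : Nat.gcd p d = 1)
    (c : ZMod p → ℕ) (h : (colSet n d p c).Nonempty) : ∑ z, (c z : ZMod p) * z = 0 := by
  obtain ⟨w, hw⟩ := h
  simp only [colSet, mem_filter, mem_univ, true_and, Tset] at hw
  have h0 : ∑ x : Fin n × Fin d, w x.1 x.2 = 0 := by
    rw [Fintype.sum_prod_type]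
    exact Finset.sum_eq_zero fun k _ => hw.1 k
  rw [← Finset.sum_fiberwise univ (fun x : Fin n × Fin d => w x.1 x.2)] at h0
  have hd : (d : ZMod p) ≠ 0 := by
    have : IsUnit (d : ZMod p) := (ZMod.isUnit_iff_coprime d p).2 (Nat.Coprime.symm hgcd)
    exact this.ne_zero
  refine (mul_eq_zero.1 (?_ : (d : ZMod p) * _ = 0)).resolve_left hd
  rw [← h0, Finset.mul_sum]
  refine Finset.sum_congr rfl fun z _ => ?_
  rw [Finset.sum_congr rfl (g := fun _ => z)]
  · rw [Finset.sum_const, hw.2 z, nsmul_eq_mul]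
    push_cast
    ring
  · intro x hx
    simpa using hx

/-- The generating polynomial `Q(x) = ∑_{a ∈ T} ∏ x_{a_i}`. -/
noncomputable def genQ (d p : ℕ) [NeZero p] (x : ZMod p → ℝ) : ℝ :=
  ∑ a ∈ Tset d p, ∏ i, x (a i)

/-- Chernoff-type bound: each colouring in `colSet` contributes the monomial `∏ x_z ^ (d c_z)` to
the expansion of `Q(x) ^ n`. -/
lemma card_colSet_mul_le (n d p : ℕ) [NeZero p] (c : ZMod p → ℕ) (x : ZMod p → ℝ)
    (hx : ∀ z, 0 ≤ x z) :
    (#(colSet n d p c) : ℝ) * ∏ z, x z ^ (d * c z) ≤ genQ d p x ^ n := by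
  have h1 : genQ d p x ^ n =
      ∑ w ∈ Fintype.piFinset (fun _ : Fin n => Tset d p), ∏ k, ∏ i, x (w k i) := by
    rw [← Finset.prod_univ_sum (fun _ : Fin n => Tset d p) (fun _ a => ∏ i, x (a i))]
    simp [genQ]
  have h2 : ∀ w ∈ colSet n d p c, ∏ z, x z ^ (d * c z) = ∏ k, ∏ i, x (w k i) := by
    intro w hw
    simp only [colSet, mem_filter, mem_univ, true_and] at hw
    rw [← Fintype.prod_prod_type', ← Finset.prod_fiberwise univ (fun y : Fin n × Fin d => w y.1 y.2)]
    refine Finset.prod_congr rfl fun z _ => ?_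
    rw [Finset.prod_congr rfl (g := fun _ => x z)]
    · rw [Finset.prod_const, hw.2 z]
    · intro y hy
      simp only [mem_filter, mem_univ, true_and] at hy
      rw [hy]
  rw [h1, ← nsmul_eq_mul, ← Finset.sum_const, Finset.sum_congr rfl h2]
  refine Finset.sum_le_sum_of_subset_of_nonneg ?_ fun w _ _ =>
    Finset.prod_nonneg fun k _ => Finset.prod_nonneg fun i _ => hx _
  intro w hw
  simp only [colSet, mem_filter, mem_univ, true_and] at hw
  simpa [Fintype.mem_piFinset] using hw.1

/-! ### Factorials of multiples -/

/-- The main term of `(d m)! / m!` in Stirling's formula, namely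
`d ^ (d m) * m ^ ((d - 1) m) * e ^ (-(d - 1) m)`; no power of `m` is lost. -/
noncomputable def stirlingMain (d m : ℕ) : ℝ :=
  (d : ℝ) ^ (d * m) * (m : ℝ) ^ ((d - 1) * m) * Real.exp (-1) ^ ((d - 1) * m)

lemma factorial_eq_stirlingSeq {k : ℕ} (hk : k ≠ 0) :
    (k.factorial : ℝ) = Stirling.stirlingSeq k * √(2 * k) * ((k : ℝ) * Real.exp (-1)) ^ k := by
  have hk' : (0 : ℝ) < k := by positivity
  rw [Stirling.stirlingSeq, Real.exp_neg, ← div_eq_mul_inv]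
  field_simp

lemma stirlingSeq_le {k : ℕ} (hk : k ≠ 0) : Stirling.stirlingSeq k ≤ Real.exp 1 / √2 := by
  obtain ⟨j, rfl⟩ := Nat.exists_eq_succ_of_ne_zero hk
  have := Stirling.stirlingSeq'_antitone (Nat.zero_le j)
  simpa [Stirling.stirlingSeq_one] using this

lemma factorial_mul_bounds (d : ℕ) (hd : 1 ≤ d) :
    ∃ b B : ℝ, 0 < b ∧ 0 < B ∧ ∀ m : ℕ,
      b * (m.factorial * stirlingMain d m) ≤ (d * m).factorial ∧
      ((d * m).factorial : ℝ) ≤ B * (m.factorial * stirlingMain d m) := by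
  have hl : 0 < √Real.pi := Real.sqrt_pos.2 Real.pi_pos
  have hu : 0 < Real.exp 1 / √2 := by positivity
  have hdr : 0 < √(d : ℝ) := Real.sqrt_pos.2 (by exact_mod_cast hd)
  set l := √Real.pi
  set u := Real.exp 1 / √2
  refine ⟨min 1 (√d * l / u), max 1 (√d * u / l), by positivity, by positivity, fun m => ?_⟩
  rcases Nat.eq_zero_or_pos m with rfl | hm
  · simp [stirlingMain]
  have hm0 : m ≠ 0 := hm.ne'
  have hdm : d * m ≠ 0 := Nat.mul_ne_zero (by omega) hm0
  have hX : 0 < √(2 * (m : ℝ)) * ((d * m : ℝ) * Real.exp (-1)) ^ (d * m) := by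
    have : (0 : ℝ) < d := by exact_mod_cast hd
    have : (0 : ℝ) < m := by exact_mod_cast hm
    positivity
  have e1 : ((d * m).factorial : ℝ) = Stirling.stirlingSeq (d * m) * √d *
      (√(2 * (m : ℝ)) * ((d * m : ℝ) * Real.exp (-1)) ^ (d * m)) := by
    rw [factorial_eq_stirlingSeq hdm]
    push_cast
    rw [show (2 : ℝ) * (d * m) = d * (2 * m) by ring, Real.sqrt_mul (by positivity)]
    ring
  have e2 : (m.factorial : ℝ) * stirlingMain d m = Stirling.stirlingSeq m *
      (√(2 * (m : ℝ)) * ((d * m : ℝ) * Real.exp (-1)) ^ (d * m)) := by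
    rw [factorial_eq_stirlingSeq hm0, stirlingMain]
    obtain ⟨e, rfl⟩ : ∃ e, d = e + 1 := ⟨d - 1, by omega⟩
    rw [Nat.add_sub_cancel, add_mul, one_mul]
    simp only [mul_pow, pow_add]
    ring
  rw [e1, e2]
  set X := √(2 * (m : ℝ)) * ((d * m : ℝ) * Real.exp (-1)) ^ (d * m)
  have a1 := Stirling.sqrt_pi_le_stirlingSeq hm0
  have a2 := Stirling.sqrt_pi_le_stirlingSeq hdm
  have a3 := stirlingSeq_le hm0
  have a4 := stirlingSeq_le hdm
  constructor
  · calc min 1 (√d * l / u) * (Stirling.stirlingSeq m * X) ≤ √d * l / u * (u * X) :=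
          mul_le_mul (min_le_right _ _) (mul_le_mul_of_nonneg_right a3 hX.le)
            (mul_nonneg (hl.le.trans a1) hX.le) (by positivity)
      _ = l * √d * X := by field_simp
      _ ≤ _ := by gcongr
  · calc _ ≤ u * √d * X := by gcongr
      _ = √d * u / l * (l * X) := by field_simp
      _ ≤ _ := mul_le_mul (le_max_right _ _) (mul_le_mul_of_nonneg_right a1 hX.le)
          (by positivity) (by positivity)

lemma stirlingMain_nonneg (d m : ℕ) : 0 ≤ stirlingMain d m := by
  unfold stirlingMain; positivity

/-- The ratio of multinomial coefficients `binom(n; c) / binom(d n; d c)` is at most a constant times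
the exponential of `-(d - 1)` times the entropy; no polynomial factor is lost. -/
lemma factorial_ratio_le (d p : ℕ) [NeZero p] (hd : 1 ≤ d) :
    ∃ K : ℝ, 0 < K ∧ ∀ (n : ℕ) (c : ZMod p → ℕ), 0 < n → ∑ z, c z = n →
      (n.factorial : ℝ) * ∏ z, ((d * c z).factorial : ℝ) ≤
        K * ((n * d).factorial * ∏ z, ((c z).factorial : ℝ)) *
          ∏ z, ((c z : ℝ) / n) ^ ((d - 1) * c z) := by
  obtain ⟨b, B, hb, hB, h⟩ := factorial_mul_bounds d hd
  refine ⟨B ^ p / b, by positivity, fun n c hn hc => ?_⟩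
  have hn' : (0 : ℝ) < n := by exact_mod_cast hn
  have hS : ∏ z, stirlingMain d (c z) =
      stirlingMain d n * ∏ z, ((c z : ℝ) / n) ^ ((d - 1) * c z) := by
    simp only [stirlingMain, Finset.prod_mul_distrib, div_pow, Finset.prod_div_distrib,
      Finset.prod_pow_eq_pow_sum, ← Finset.mul_sum, hc]
    field_simp
  have hP : 0 ≤ ∏ z, ((c z : ℝ) / n) ^ ((d - 1) * c z) :=
    Finset.prod_nonneg fun z _ => by positivity
  set R := ∏ z, ((c z : ℝ) / n) ^ ((d - 1) * c z)
  have h1 : ∏ z, ((d * c z).factorial : ℝ) ≤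
      B ^ p * ((∏ z, ((c z).factorial : ℝ)) * (stirlingMain d n * R)) := by
    calc _ ≤ ∏ z, (B * ((c z).factorial * stirlingMain d (c z))) :=
          Finset.prod_le_prod (fun _ _ => by positivity) fun z _ => (h (c z)).2
      _ = _ := by
          rw [Finset.prod_mul_distrib, Finset.prod_mul_distrib, hS]
          simp [ZMod.card]
  have h2 := (h n).1
  rw [mul_comm d n] at h2
  have hF : 0 ≤ ∏ z, ((c z).factorial : ℝ) := Finset.prod_nonneg fun z _ => by positivity
  set F := ∏ z, ((c z).factorial : ℝ)
  calc _ ≤ (n.factorial : ℝ) * (B ^ p * (F * (stirlingMain d n * R))) := by gcongr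
    _ = B ^ p / b * (b * (n.factorial * stirlingMain d n) * F) * R := by field_simp
    _ ≤ B ^ p / b * ((n * d).factorial * F) * R := by gcongr

/-! ### The stability of Young's inequality -/

/-- The arithmetic-geometric mean inequality with a remainder, obtained by applying the usual
inequality after replacing both `z i` and `z j` by their geometric mean. -/
lemma amgm_gap {d : ℕ} (z : Fin d → ℝ) (hz : ∀ k, 0 ≤ z k) {i j : Fin d} (hij : i ≠ j) :
    ∏ k, z k ^ (1 / d : ℝ) + 1 / d * (√(z i) - √(z j)) ^ 2 ≤ 1 / d * ∑ k, z k := by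
  have hd : (d : ℝ) ≠ 0 := by
    have := i.pos
    positivity
  set z' : Fin d → ℝ := fun k => if k = i ∨ k = j then √(z i) * √(z j) else z k with hz'
  have hz'0 : ∀ k, 0 ≤ z' k := by
    intro k
    simp only [hz']
    split_ifs
    · positivity
    · exact hz k
  have hj : j ∈ univ.erase i := by simp [hij.symm]
  have hzi : z' i = √(z i) * √(z j) := by simp [hz']
  have hzj : z' j = √(z i) * √(z j) := by simp [hz']
  have hrest : ∀ k ∈ (univ.erase i).erase j, z' k = z k := by
    intro k hk
    simp only [mem_erase, mem_univ, and_true] at hk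
    simp [hz', hk.1, hk.2]
  have hprod : ∏ k, z' k ^ (1 / d : ℝ) = ∏ k, z k ^ (1 / d : ℝ) := by
    rw [← Finset.mul_prod_erase univ _ (mem_univ i), ← Finset.mul_prod_erase _ _ hj,
      ← Finset.mul_prod_erase univ (fun k => z k ^ (1 / d : ℝ)) (mem_univ i),
      ← Finset.mul_prod_erase _ (fun k => z k ^ (1 / d : ℝ)) hj, ← mul_assoc, ← mul_assoc]
    congr 1
    · rw [hzi, hzj, ← Real.mul_rpow (by positivity) (by positivity),
        ← Real.mul_rpow (hz i) (hz j)]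
      congr 1
      nlinarith [Real.mul_self_sqrt (hz i), Real.mul_self_sqrt (hz j)]
    · exact Finset.prod_congr rfl fun k hk => by rw [hrest k hk]
  have hsum : ∑ k, z' k = ∑ k, z k - (√(z i) - √(z j)) ^ 2 := by
    rw [← Finset.add_sum_erase univ _ (mem_univ i), ← Finset.add_sum_erase _ _ hj,
      ← Finset.add_sum_erase univ z (mem_univ i), ← Finset.add_sum_erase _ z hj,
      Finset.sum_congr rfl hrest, hzi, hzj]
    nlinarith [Real.sq_sqrt (hz i), Real.sq_sqrt (hz j)]
  have := Real.geom_mean_le_arith_mean_weighted univ (fun _ : Fin d => (1 / d : ℝ)) z'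
    (fun _ _ => by positivity) (by simp [hd]) (fun k _ => hz'0 k)
  rw [hprod, ← Finset.mul_sum, hsum] at this
  linarith

lemma sum_Tset_prod_succAbove (e p : ℕ) [NeZero p] (μ : ZMod p → ℝ) (hμ : ∑ z, μ z = 1)
    (k : Fin (e + 1)) : ∑ a ∈ Tset (e + 1) p, ∏ l, μ (a (k.succAbove l)) = 1 := by
  calc _ = ∑ b : Fin e → ZMod p, ∏ l, μ (b l) := by
        refine Finset.sum_bij' (fun a _ => fun l => a (k.succAbove l))
          (fun b _ => k.insertNth (α := fun _ => ZMod p) (-∑ l, b l) b) ?_ ?_ ?_ ?_ ?_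
        · simp
        · intro b _
          simp [Tset, Fin.sum_univ_succAbove _ k]
        · intro a ha
          simp only [Tset, mem_filter, mem_univ, true_and, Fin.sum_univ_succAbove _ k] at ha
          funext l
          refine Fin.succAboveCases k ?_ (fun l => ?_) l
          · simp [eq_neg_of_add_eq_zero_left ha]
          · simp
        · intro b _
          simp
        · intro a _
          rfl
    _ = 1 := by
        have := Finset.prod_univ_sum (fun _ : Fin e => (univ : Finset (ZMod p))) (fun _ z => μ z)
        simpa [hμ] using this.symm

lemma prod_prod_succAbove (e : ℕ) (f : Fin (e + 1) → ℝ) :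
    ∏ k : Fin (e + 1), ∏ l : Fin e, f (k.succAbove l) = ∏ k, f k ^ e := by
  have h : ∀ k : Fin (e + 1),
      ∏ l : Fin e, f (k.succAbove l) = ∏ l, if l = k then 1 else f l := by
    intro k
    rw [Fin.prod_univ_succAbove _ k]
    simp [Fin.succAbove_ne]
  rw [Finset.prod_congr rfl fun k _ => h k, Finset.prod_comm]
  refine Finset.prod_congr rfl fun l _ => ?_
  rw [← Finset.mul_prod_erase univ _ (mem_univ l), if_pos rfl, one_mul,
    Finset.prod_congr rfl (g := fun _ => f l)]
  · simp
  · intro k hk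
    rw [if_neg (ne_of_mem_erase hk).symm]

/-- The point at which the Chernoff-type bound is evaluated: `x_z = μ_z ^ ((d - 1) / d)`. -/
noncomputable def xpt (d : ℕ) {p : ℕ} (μ : ZMod p → ℝ) (z : ZMod p) : ℝ :=
  μ z ^ (((d - 1 : ℕ) : ℝ) / d)

/-- Young's inequality `Q(x) ≤ 1` with the remainder coming from a single tuple `a` of sum zero and
two of its positions. -/
lemma genQ_gap (e p : ℕ) [NeZero p] (μ : ZMod p → ℝ) (h0 : ∀ z, 0 ≤ μ z) (hμ : ∑ z, μ z = 1)
    (a : Fin (e + 1) → ZMod p) (ha : a ∈ Tset (e + 1) p) {i j : Fin (e + 1)} (hij : i ≠ j) :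
    genQ (e + 1) p (xpt (e + 1) μ) + 1 / (e + 1 : ℕ) *
      (√(∏ l, μ (a (i.succAbove l))) - √(∏ l, μ (a (j.succAbove l)))) ^ 2 ≤ 1 := by
  have hz : ∀ (a : Fin (e + 1) → ZMod p) (k : Fin (e + 1)), 0 ≤ ∏ l, μ (a (k.succAbove l)) :=
    fun a k => Finset.prod_nonneg fun l _ => h0 _
  have hgm : ∀ a : Fin (e + 1) → ZMod p, ∏ k, xpt (e + 1) μ (a k) =
      ∏ k : Fin (e + 1), (∏ l, μ (a (k.succAbove l))) ^ (1 / (e + 1 : ℕ) : ℝ) := by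
    intro a
    rw [Real.finsetProd_rpow _ _ fun k _ => hz a k, prod_prod_succAbove e fun k => μ (a k),
      ← Real.finsetProd_rpow _ _ fun k _ => by have := h0 (a k); positivity]
    refine Finset.prod_congr rfl fun k _ => ?_
    rw [xpt, ← Real.rpow_natCast, ← Real.rpow_mul (h0 _)]
    congr 1
    simp [div_eq_mul_inv]
  have hle : ∀ b ∈ Tset (e + 1) p,
      ∏ k, xpt (e + 1) μ (b k) + 1 / (e + 1 : ℕ) *
      (√(∏ l, μ (b (i.succAbove l))) - √(∏ l, μ (b (j.succAbove l)))) ^ 2 ≤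
      1 / (e + 1 : ℕ) * ∑ k : Fin (e + 1), ∏ l, μ (b (k.succAbove l)) := by
    intro b _
    rw [hgm]
    exact amgm_gap _ (hz b) hij
  have hsum := Finset.sum_le_sum hle
  rw [← Finset.mul_sum, Finset.sum_comm,
    Finset.sum_congr rfl fun k _ => sum_Tset_prod_succAbove e p μ hμ k,
    Finset.sum_add_distrib] at hsum
  have h1 : (1 / (e + 1 : ℕ) : ℝ) * ∑ _k : Fin (e + 1), (1 : ℝ) = 1 := by
    simp
    field_simp
  rw [h1] at hsum
  have hsingle := Finset.single_le_sum (s := Tset (e + 1) p)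
    (f := fun b => 1 / ((e + 1 : ℕ) : ℝ) *
      (√(∏ l, μ (b (i.succAbove l))) - √(∏ l, μ (b (j.succAbove l)))) ^ 2)
    (fun b _ => by positivity) ha
  unfold genQ
  linarith

/-- If all entries of `b` have mass at least `δ`, then a small deficit `1 - Q` makes `√μ` almost
invariant under the reflection `s ↦ -s - ∑ b`. -/
lemma reflection_gap (e p : ℕ) [NeZero p] (μ : ZMod p → ℝ) (h0 : ∀ z, 0 ≤ μ z)
    (hμ : ∑ z, μ z = 1) {δ : ℝ} (hδ : 0 < δ) (b : Fin e → ZMod p) (hb : ∀ l, δ ≤ μ (b l))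
    (s : ZMod p) :
    δ ^ e * (√(μ s) - √(μ (-s - ∑ l, b l))) ^ 2 ≤
      (e + 2 : ℕ) * (1 - genQ (e + 2) p (xpt (e + 2) μ)) := by
  set t := -s - ∑ l, b l with ht
  let a : Fin (e + 2) → ZMod p := Fin.cons s (Fin.cons t b)
  have ha : a ∈ Tset (e + 2) p := by
    simp [Tset, a, Fin.sum_univ_succ, ht]
  have hgap := genQ_gap (e + 1) p μ h0 hμ a ha (i := 1) (j := 0) (by simp)
  have e0 : ∏ l, μ (a ((0 : Fin (e + 2)).succAbove l)) = μ t * ∏ l, μ (b l) := by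
    simp [Fin.prod_univ_succ, a]
  have e1 : ∏ l, μ (a ((1 : Fin (e + 2)).succAbove l)) = μ s * ∏ l, μ (b l) := by
    rw [Fin.prod_univ_succ]
    change μ (a (Fin.succAbove (Fin.succ 0) 0)) *
      ∏ l : Fin e, μ (a (Fin.succAbove (Fin.succ 0) (Fin.succ l))) = _
    simp only [Fin.succ_succAbove_zero, Fin.succ_succAbove_succ, Fin.succAbove_zero]
    simp [a]
  rw [e0, e1, Real.sqrt_mul (h0 _), Real.sqrt_mul (h0 _), ← sub_mul, mul_pow,
    Real.sq_sqrt (Finset.prod_nonneg fun l _ => h0 _)] at hgap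
  have hpr : δ ^ e ≤ ∏ l, μ (b l) := by
    calc δ ^ e = ∏ _l : Fin e, δ := by simp
      _ ≤ _ := Finset.prod_le_prod (fun _ _ => hδ.le) fun l _ => hb l
  have hE : (0 : ℝ) < (e + 2 : ℕ) := by positivity
  have h3 : (√(μ s) - √(μ t)) ^ 2 * ∏ l, μ (b l) ≤
      (e + 2 : ℕ) * (1 - genQ (e + 2) p (xpt (e + 2) μ)) := by
    have : 1 / ((e + 2 : ℕ) : ℝ) * ((√(μ s) - √(μ t)) ^ 2 * ∏ l, μ (b l)) ≤
        1 - genQ (e + 2) p (xpt (e + 2) μ) := by linarith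
    calc _ = (e + 2 : ℕ) * (1 / ((e + 2 : ℕ) : ℝ) *
          ((√(μ s) - √(μ t)) ^ 2 * ∏ l, μ (b l))) := by field_simp
      _ ≤ _ := by gcongr
  calc _ ≤ (∏ l, μ (b l)) * (√(μ s) - √(μ t)) ^ 2 := by gcongr
    _ ≤ _ := by linarith

/-- Two distinct residues of mass at least `δ` give two reflections whose composition is a nonzero
translation; as it generates `F_p`, the measure `μ` is close to uniform. -/
lemma stability_of_pair (e p : ℕ) [Fact p.Prime] (he : 1 ≤ e) (μ : ZMod p → ℝ)
    (h0 : ∀ z, 0 ≤ μ z) (hμ : ∑ z, μ z = 1) {δ : ℝ} (hδ : 0 < δ) {s t : ZMod p} (hst : s ≠ t)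
    (hs : δ ≤ μ s) (ht : δ ≤ μ t) :
    ∑ z, (μ z - 1 / p) ^ 2 ≤
      16 * p ^ 3 * (e + 2 : ℕ) / δ ^ e * (1 - genQ (e + 2) p (xpt (e + 2) μ)) := by
  set D := 1 - genQ (e + 2) p (xpt (e + 2) μ) with hD
  have hp0 : (0 : ℝ) < p := by exact_mod_cast (Fact.out : p.Prime).pos
  have hδe : 0 < δ ^ e := by positivity
  have hD0 : 0 ≤ (e + 2 : ℕ) * D / δ ^ e := by
    have := reflection_gap e p μ h0 hμ hδ (fun _ => s) (fun _ => hs) 0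
    have h2 : 0 ≤ δ ^ e * (√(μ 0) - √(μ (-0 - ∑ _l : Fin e, s))) ^ 2 := by positivity
    have h3 := h2.trans this
    positivity
  set η := √((e + 2 : ℕ) * D / δ ^ e) with hη
  have hη0 : 0 ≤ η := Real.sqrt_nonneg _
  have refl : ∀ b : Fin e → ZMod p, (∀ l, δ ≤ μ (b l)) → ∀ w,
      |√(μ w) - √(μ (-w - ∑ l, b l))| ≤ η := by
    intro b hb w
    refine Real.le_sqrt_of_sq_le ?_
    rw [sq_abs, le_div_iff₀ hδe, mul_comm]
    exact reflection_gap e p μ h0 hμ hδ b hb w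
  have step : ∀ w, |√(μ w) - √(μ (w - (t - s)))| ≤ 2 * η := by
    intro w
    let i0 : Fin e := ⟨0, he⟩
    have r1 := refl (fun _ => s) (fun _ => hs) w
    have r2 := refl (Function.update (fun _ => s) i0 t) (by
      intro l
      by_cases hl : l = i0
      · subst hl; simpa using ht
      · simpa [hl] using hs) (-w - ∑ _l : Fin e, s)
    have hsum : ∑ l, Function.update (fun _ : Fin e => s) i0 t l = ∑ _l : Fin e, s + (t - s) := by
      rw [Finset.sum_update_of_mem (mem_univ _),
        ← Finset.add_sum_erase univ (fun _ : Fin e => s) (mem_univ i0), ← Finset.erase_eq]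
      ring
    rw [hsum, show -(-w - ∑ _l : Fin e, s) - (∑ _l : Fin e, s + (t - s)) = w - (t - s) by ring]
      at r2
    calc _ ≤ _ := abs_sub_le _ (√(μ (-w - ∑ _l : Fin e, s))) _
      _ ≤ 2 * η := by linarith
  have iter : ∀ (k : ℕ) w, |√(μ w) - √(μ (w - k * (t - s)))| ≤ k * (2 * η) := by
    intro k
    induction k with
    | zero => simp
    | succ k ih =>
      intro w
      have h1 := ih w
      have h2 := step (w - k * (t - s))
      rw [show w - k * (t - s) - (t - s) = w - ((k + 1 : ℕ) : ZMod p) * (t - s) by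
        push_cast; ring] at h2
      calc _ ≤ _ := abs_sub_le _ (√(μ (w - k * (t - s)))) _
        _ ≤ k * (2 * η) + 2 * η := add_le_add h1 h2
        _ = _ := by push_cast; ring
  have hts : t - s ≠ 0 := sub_ne_zero.2 hst.symm
  have all : ∀ w w', |√(μ w) - √(μ w')| ≤ p * (2 * η) := by
    intro w w'
    have h1 := iter ((w - w') / (t - s)).val w
    rw [ZMod.natCast_zmod_val, div_mul_cancel₀ _ hts, sub_sub_cancel] at h1
    refine h1.trans ?_
    gcongr
    exact (ZMod.val_lt _).le
  have hle1 : ∀ w, μ w ≤ 1 := fun w => by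
    rw [← hμ]; exact Finset.single_le_sum (fun z _ => h0 z) (mem_univ w)
  have all' : ∀ w w', |μ w - μ w'| ≤ 4 * p * η := by
    intro w w'
    have e1 : μ w - μ w' = (√(μ w) - √(μ w')) * (√(μ w) + √(μ w')) := by
      nlinarith [Real.sq_sqrt (h0 w), Real.sq_sqrt (h0 w')]
    have b1 : √(μ w) ≤ 1 := Real.sqrt_le_one.2 (hle1 w)
    have b2 : √(μ w') ≤ 1 := Real.sqrt_le_one.2 (hle1 w')
    rw [e1, abs_mul, abs_of_nonneg (by positivity : 0 ≤ √(μ w) + √(μ w'))]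
    calc _ ≤ p * (2 * η) * 2 := by
          gcongr
          · exact all w w'
          · linarith
      _ = _ := by ring
  have hdev : ∀ w, |μ w - 1 / p| ≤ 4 * p * η := by
    intro w
    have e1 : μ w - 1 / p = (∑ w', (μ w - μ w')) / p := by
      rw [Finset.sum_sub_distrib, hμ]
      simp [ZMod.card]
      field_simp
    rw [e1, abs_div, abs_of_pos hp0, div_le_iff₀ hp0]
    calc _ ≤ ∑ w', |μ w - μ w'| := Finset.abs_sum_le_sum_abs _ _
      _ ≤ ∑ _w' : ZMod p, 4 * p * η := Finset.sum_le_sum fun w' _ => all' w w'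
      _ = _ := by simp [ZMod.card]; ring
  calc _ ≤ ∑ _z : ZMod p, (4 * p * η) ^ 2 := Finset.sum_le_sum fun z _ => by
        rw [← sq_abs]
        gcongr
        exact hdev z
    _ = 16 * p ^ 3 * η ^ 2 := by simp [ZMod.card]; ring
    _ = _ := by rw [hη, Real.sq_sqrt hD0]; ring

/-- Quantitative stability: away from the point mass at `0`, the deficit `1 - Q` controls the squared
distance to the uniform distribution. -/
lemma stability (e p : ℕ) [Fact p.Prime] (he : 1 ≤ e) (hgcd : Nat.gcd p (e + 2) = 1)
    (μ : ZMod p → ℝ) (h0 : ∀ z, 0 ≤ μ z) (hμ : ∑ z, μ z = 1) {δ : ℝ} (hδ : 0 < δ)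
    (hδp : δ ≤ 1 / (4 * p)) {z₀ : ZMod p} (hz₀ : z₀ ≠ 0) (hz : δ ≤ μ z₀) :
    ∑ z, (μ z - 1 / p) ^ 2 ≤
      16 * p ^ 3 * (e + 2 : ℕ) / δ ^ e * (1 - genQ (e + 2) p (xpt (e + 2) μ)) := by
  have hp1 : (1 : ℝ) ≤ p := by exact_mod_cast (Fact.out : p.Prime).one_le
  have hp0 : (0 : ℝ) < p := by linarith
  obtain ⟨s, -, hs⟩ := Finset.exists_le_of_sum_le (s := univ) (f := fun _ : ZMod p => (1 / p : ℝ))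
    (g := μ) ⟨0, mem_univ _⟩ (by rw [hμ]; simp [ZMod.card])
  have hδs : δ ≤ μ s := by
    refine hδp.trans (le_trans ?_ hs)
    gcongr
    linarith
  by_cases hs0 : s = 0
  · exact stability_of_pair e p he μ h0 hμ hδ (s := s) (t := z₀) (by rw [hs0]; exact hz₀.symm) hδs hz
  -- `t` is the mirror image of `s` under the reflection defined by the constant tuple `s`
  set t : ZMod p := -s - ∑ _l : Fin e, s with ht
  have hts : s ≠ t := by
    intro h
    have hd : ((e + 2 : ℕ) : ZMod p) ≠ 0 := by
      have : IsUnit ((e + 2 : ℕ) : ZMod p) :=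
        (ZMod.isUnit_iff_coprime (e + 2) p).2 (Nat.Coprime.symm hgcd)
      exact this.ne_zero
    have : ((e + 2 : ℕ) : ZMod p) * s = 0 := by
      have h2 : s - t = 0 := sub_eq_zero.2 h
      rw [← h2, ht]
      simp
      ring
    exact (mul_ne_zero hd hs0) this
  by_cases htδ : δ ≤ μ t
  · exact stability_of_pair e p he μ h0 hμ hδ hts hδs htδ
  push Not at htδ
  have hr := reflection_gap e p μ h0 hμ hδ (fun _ => s) (fun _ => hδs) s
  rw [← ht] at hr
  set D := 1 - genQ (e + 2) p (xpt (e + 2) μ)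
  have hδe : 0 < δ ^ e := by positivity
  have hq0 : 0 < √(1 / (4 * p : ℝ)) := Real.sqrt_pos.2 (by positivity)
  have q1 : 2 * √(1 / (4 * p : ℝ)) ≤ √(μ s) := by
    refine Real.le_sqrt_of_sq_le ?_
    rw [mul_pow, Real.sq_sqrt (by positivity)]
    refine le_trans (le_of_eq ?_) hs
    field_simp
    norm_num
  have q2 : √(μ t) ≤ √(1 / (4 * p : ℝ)) := Real.sqrt_le_sqrt (htδ.le.trans hδp)
  have q3 : 1 / (4 * p : ℝ) ≤ (√(μ s) - √(μ t)) ^ 2 := by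
    rw [← Real.sq_sqrt (by positivity : (0 : ℝ) ≤ 1 / (4 * p))]
    gcongr
    linarith
  have q4 : 1 / (4 * p : ℝ) ≤ (e + 2 : ℕ) * D / δ ^ e := by
    rw [le_div_iff₀ hδe, mul_comm]
    exact le_trans (by gcongr) hr
  have hle1 : ∀ w, μ w ≤ 1 := fun w => by
    rw [← hμ]; exact Finset.single_le_sum (fun z _ => h0 z) (mem_univ w)
  have hinv : 1 / (p : ℝ) ≤ 1 := by rw [div_le_one hp0]; exact hp1
  have hinv0 : 0 < 1 / (p : ℝ) := by positivity
  calc _ ≤ ∑ _z : ZMod p, (1 : ℝ) := Finset.sum_le_sum fun z _ => by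
        rw [sq_le_one_iff_abs_le_one, abs_le]
        constructor <;> linarith [h0 z, hle1 z]
    _ = p := by simp [ZMod.card]
    _ ≤ 4 * p ^ 2 := by nlinarith
    _ = 16 * p ^ 3 * (1 / (4 * p)) := by field_simp; norm_num
    _ ≤ 16 * p ^ 3 * ((e + 2 : ℕ) * D / δ ^ e) := by gcongr
    _ = _ := by ring

/-! ### Bounds for a single class -/

/-- The normalized contribution of the vectors with counting vector `c`. -/
noncomputable def classMass (n d p : ℕ) [NeZero p] (c : ZMod p → ℕ) : ℝ :=
  (∑ v ∈ univ.filter (fun v : Fin n → ZMod p => ∀ z, phi v z = c z),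
    (Nat.card {P : Equiv.Perm (Fin n × Fin d) //
      ((adjMat n d P).map (Int.cast : ℤ → ZMod p)).mulVec v = 0} : ℝ)) / (n * d).factorial

lemma classMass_le (d p : ℕ) [NeZero p] (hd : 1 ≤ d) :
    ∃ K : ℝ, 0 < K ∧ ∀ (n : ℕ) (c : ZMod p → ℕ), 0 < n → ∑ z, c z = n →
      classMass n d p c ≤
        K * ((∏ z, ((c z : ℝ) / n) ^ ((d - 1) * c z)) * #(colSet n d p c)) := by
  obtain ⟨K, hK, h⟩ := factorial_ratio_le d p hd
  refine ⟨K, hK, fun n c hn hc => ?_⟩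
  have h1 : (∑ v ∈ univ.filter (fun v : Fin n → ZMod p => ∀ z, phi v z = c z),
      (Nat.card {P : Equiv.Perm (Fin n × Fin d) //
        ((adjMat n d P).map (Int.cast : ℤ → ZMod p)).mulVec v = 0} : ℝ)) *
        ∏ z, ((c z).factorial : ℝ) ≤
      n.factorial * ((∏ z, ((d * c z).factorial : ℝ)) * #(colSet n d p c)) := by
    exact_mod_cast class_sum_mul_le n d p c
  have h2 := h n c hn hc
  have hF : 0 < ∏ z, ((c z).factorial : ℝ) := Finset.prod_pos fun z _ => by positivity
  have hnd : (0 : ℝ) < (n * d).factorial := by positivity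
  rw [classMass, div_le_iff₀ hnd]
  refine le_of_mul_le_mul_right (h1.trans ?_) hF
  calc _ = ((n.factorial : ℝ) * ∏ z, ((d * c z).factorial : ℝ)) * #(colSet n d p c) := by ring
    _ ≤ (K * ((n * d).factorial * ∏ z, ((c z).factorial : ℝ)) *
          ∏ z, ((c z : ℝ) / n) ^ ((d - 1) * c z)) * #(colSet n d p c) := by gcongr
    _ = _ := by ring

/-- Evaluating the Chernoff-type bound at `xpt` cancels the entropy factor exactly. -/
lemma entropy_mul_card_le (n d p : ℕ) [NeZero p] (hd : 1 ≤ d) (c : ZMod p → ℕ) :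
    (∏ z, ((c z : ℝ) / n) ^ ((d - 1) * c z)) * #(colSet n d p c) ≤
      genQ d p (xpt d fun z => (c z : ℝ) / n) ^ n := by
  have h := card_colSet_mul_le n d p c (xpt d fun z => (c z : ℝ) / n)
    (fun z => by unfold xpt; positivity)
  refine le_trans (le_of_eq ?_) h
  rw [mul_comm]
  congr 1
  refine Finset.prod_congr rfl fun z _ => ?_
  have hd' : (d : ℝ) ≠ 0 := by positivity
  rw [pow_mul (xpt d _ z) d (c z), xpt, ← Real.rpow_mul_natCast (by positivity),
    div_mul_cancel₀ _ hd', Real.rpow_natCast, ← pow_mul]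

/-- A tuple of sum zero other than the zero tuple has at least two nonzero entries. -/
lemma genQ_near_zero (d p : ℕ) [NeZero p] {y : ℝ} (hy0 : 0 ≤ y) (hy1 : y ≤ 1) :
    genQ d p (fun z => if z = 0 then 1 else y) ≤ 1 + p ^ d * y ^ 2 := by
  set x : ZMod p → ℝ := fun z => if z = 0 then 1 else y with hx
  have hx0 : ∀ z, 0 ≤ x z := fun z => by simp only [hx]; split_ifs <;> linarith
  have hx1 : ∀ z, x z ≤ 1 := fun z => by simp only [hx]; split_ifs <;> linarith
  have hterm : ∀ a ∈ Tset d p, ∏ i, x (a i) ≤ (if a = 0 then 1 else 0) + y ^ 2 := by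
    intro a ha
    simp only [Tset, mem_filter, mem_univ, true_and] at ha
    by_cases h0 : a = 0
    · rw [if_pos h0]
      have : ∏ i, x (a i) ≤ 1 := Finset.prod_le_one (fun i _ => hx0 _) fun i _ => hx1 _
      nlinarith
    · rw [if_neg h0, zero_add]
      obtain ⟨i, hi⟩ : ∃ i, a i ≠ 0 := by
        by_contra hcon
        push Not at hcon
        exact h0 (funext hcon)
      obtain ⟨j, hji, hj⟩ : ∃ j, j ∈ univ.erase i ∧ a j ≠ 0 := by
        by_contra hcon
        push Not at hcon
        rw [← Finset.add_sum_erase univ _ (mem_univ i), Finset.sum_eq_zero hcon, add_zero] at ha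
        exact hi ha
      rw [← Finset.mul_prod_erase univ _ (mem_univ i), ← Finset.mul_prod_erase _ _ hji]
      have h1 : x (a i) = y := by simp [hx, hi]
      have h2 : x (a j) = y := by simp [hx, hj]
      have h3 : ∏ k ∈ (univ.erase i).erase j, x (a k) ≤ 1 :=
        Finset.prod_le_one (fun i _ => hx0 _) fun i _ => hx1 _
      rw [h1, h2, sq]
      gcongr
      exact mul_le_of_le_one_right hy0 h3
  calc genQ d p x ≤ ∑ a ∈ Tset d p, ((if a = 0 then 1 else 0) + y ^ 2) :=
        Finset.sum_le_sum hterm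
    _ ≤ ∑ a : Fin d → ZMod p, ((if a = 0 then 1 else 0) + y ^ 2) :=
        Finset.sum_le_sum_of_subset_of_nonneg (Finset.subset_univ _)
          fun a _ _ => by split_ifs <;> positivity
    _ = _ := by
        rw [Finset.sum_add_distrib]
        simp [ZMod.card]

/-- The bound used near the point mass at `0`, where `m` is the number of nonzero coordinates: the
Chernoff-type bound is evaluated at `x_0 = 1` and `x_z = √(m / n)` for `z ≠ 0`. -/
lemma entropy_mul_card_le_near (n d p : ℕ) [NeZero p] (hd : 2 ≤ d) (c : ZMod p → ℕ) (hn : 0 < n)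
    (hc : ∑ z, c z = n) {m : ℕ} (hm : ∑ z ∈ univ.erase 0, c z = m) (hm0 : 0 < m) :
    (∏ z, ((c z : ℝ) / n) ^ ((d - 1) * c z)) * #(colSet n d p c) ≤
      (Real.exp (p ^ d) * √((m : ℝ) / n) ^ (d - 2)) ^ m := by
  have hnr : (0 : ℝ) < n := by exact_mod_cast hn
  have hmr : (0 : ℝ) < m := by exact_mod_cast hm0
  have hmn : m ≤ n := by
    rw [← hm, ← hc]
    exact Finset.sum_le_sum_of_subset (Finset.erase_subset _ _)
  set y := √((m : ℝ) / n) with hy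
  have hy0 : 0 < y := Real.sqrt_pos.2 (by positivity)
  have hy2 : y ^ 2 = (m : ℝ) / n := Real.sq_sqrt (by positivity)
  have hy1 : y ≤ 1 := Real.sqrt_le_one.2 (by
    rw [div_le_one hnr]; exact_mod_cast hmn)
  have hR : ∏ z, ((c z : ℝ) / n) ^ ((d - 1) * c z) ≤ y ^ (2 * (d - 1) * m) := by
    rw [← Finset.mul_prod_erase univ _ (mem_univ 0)]
    have h1 : ((c 0 : ℝ) / n) ^ ((d - 1) * c 0) ≤ 1 := by
      refine pow_le_one₀ (by positivity) ?_
      rw [div_le_one hnr]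
      have : c 0 ≤ n := by
        rw [← hc]; exact Finset.single_le_sum (fun _ _ => Nat.zero_le _) (mem_univ 0)
      exact_mod_cast this
    have h2 : ∏ z ∈ univ.erase 0, ((c z : ℝ) / n) ^ ((d - 1) * c z) ≤
        ∏ z ∈ univ.erase 0, (y ^ 2) ^ ((d - 1) * c z) := by
      refine Finset.prod_le_prod (fun z _ => by positivity) fun z hz => ?_
      rw [hy2]
      have : c z ≤ m := by
        rw [← hm]; exact Finset.single_le_sum (f := c) (fun _ _ => Nat.zero_le _) hz
      gcongr
    rw [Finset.prod_pow_eq_pow_sum, ← Finset.mul_sum, hm, ← pow_mul, ← mul_assoc] at h2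
    calc _ ≤ 1 * y ^ (2 * (d - 1) * m) :=
          mul_le_mul h1 h2 (Finset.prod_nonneg fun z _ => by positivity) zero_le_one
      _ = _ := one_mul _
  have hN : (#(colSet n d p c) : ℝ) * y ^ (d * m) ≤ Real.exp (p ^ d) ^ m := by
    have h := card_colSet_mul_le n d p c (fun z => if z = 0 then 1 else y)
      (fun z => by split_ifs <;> positivity)
    have h1 : ∏ z, (if z = 0 then 1 else y) ^ (d * c z) = y ^ (d * m) := by
      rw [← Finset.mul_prod_erase univ _ (mem_univ 0), if_pos rfl, one_pow, one_mul,
        ← hm, Finset.mul_sum, ← Finset.prod_pow_eq_pow_sum]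
      exact Finset.prod_congr rfl fun z hz => by rw [if_neg (ne_of_mem_erase hz)]
    rw [h1] at h
    refine h.trans ?_
    have hQ := genQ_near_zero d p hy0.le hy1
    have hQ0 : 0 ≤ genQ d p (fun z => if z = 0 then 1 else y) :=
      Finset.sum_nonneg fun a _ => Finset.prod_nonneg fun i _ => by
        simp only; split_ifs <;> positivity
    calc _ ≤ (Real.exp (p ^ d * y ^ 2)) ^ n := by
          gcongr
          refine hQ.trans ?_
          rw [add_comm]
          exact Real.add_one_le_exp _
      _ = Real.exp (p ^ d) ^ m := by
          rw [hy2, ← Real.exp_nat_mul, ← Real.exp_nat_mul]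
          congr 1
          field_simp
  obtain ⟨e, rfl⟩ : ∃ e, d = e + 2 := ⟨d - 2, by omega⟩
  have hsplit : y ^ (2 * (e + 2 - 1) * m) = y ^ ((e + 2) * m) * (y ^ e) ^ m := by
    rw [← pow_mul, ← pow_add]
    congr 1
    rw [show e + 2 - 1 = e + 1 by omega]
    ring
  calc _ ≤ y ^ (2 * (e + 2 - 1) * m) * #(colSet n (e + 2) p c) := by gcongr
    _ = (#(colSet n (e + 2) p c) * y ^ ((e + 2) * m)) * (y ^ e) ^ m := by rw [hsplit]; ring
    _ ≤ Real.exp (p ^ (e + 2)) ^ m * (y ^ e) ^ m := by gcongr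
    _ = _ := by rw [mul_pow]; rfl

/-- With `m ≥ 2` and `m / n` small, the previous bound is `O(n ^ (-(d - 2)) 2 ^ (-m))`. -/
lemma near_numeric {n m e : ℕ} {E : ℝ} (he : 1 ≤ e) (hE : 1 ≤ E) (hn : 0 < n) (hm : 2 ≤ m)
    (hsmall : E ^ 2 * ((m : ℝ) / n) ≤ 1 / 16) :
    (E * √((m : ℝ) / n) ^ e) ^ m ≤ (16 * E ^ 2) ^ e / n ^ e * (1 / 2) ^ m := by
  have hnr : (0 : ℝ) < n := by exact_mod_cast hn
  set y := √((m : ℝ) / n) with hy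
  have hy0 : 0 ≤ y := Real.sqrt_nonneg _
  have hy2 : y ^ 2 = (m : ℝ) / n := Real.sq_sqrt (by positivity)
  have hu2 : (E * y) ^ 2 = E ^ 2 * ((m : ℝ) / n) := by rw [mul_pow, hy2]
  have hu : E * y ≤ 1 / 4 := by
    refine le_of_sq_le_sq ?_ (by norm_num)
    rw [hu2]
    norm_num
    linarith
  have h1 : (E * y) ^ m ≤ 16 * E ^ 2 / n * (1 / 2) ^ m := by
    obtain ⟨k, rfl⟩ : ∃ k, m = k + 2 := ⟨m - 2, by omega⟩
    have hpow : ((k + 2 : ℕ) : ℝ) ≤ 2 ^ (k + 2) := by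
      exact_mod_cast (Nat.lt_two_pow_self (n := k + 2)).le
    calc (E * y) ^ (k + 2) = (E * y) ^ k * (E * y) ^ 2 := pow_add _ _ _
      _ ≤ (1 / 4) ^ k * (E ^ 2 * (2 ^ (k + 2) / n)) := by
          rw [hu2]
          gcongr
      _ = _ := by
          rw [show (1 / 4 : ℝ) = 1 / 2 * (1 / 2) by norm_num, mul_pow, pow_add, pow_add]
          field_simp
          norm_num
          rw [mul_assoc, ← mul_pow]
          norm_num
  have h2 : (E * y ^ e) ^ m ≤ ((E * y) ^ m) ^ e := by
    rw [← pow_mul, mul_comm m e, pow_mul, mul_pow E y e]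
    gcongr
    exact le_self_pow₀ hE (by omega)
  calc _ ≤ ((E * y) ^ m) ^ e := h2
    _ ≤ (16 * E ^ 2 / n * (1 / 2) ^ m) ^ e := by gcongr
    _ = (16 * E ^ 2) ^ e / n ^ e * ((1 / 2) ^ m) ^ e := by rw [mul_pow, div_pow]
    _ ≤ (16 * E ^ 2) ^ e / n ^ e * (1 / 2) ^ m := by
        gcongr
        exact pow_le_of_le_one (by positivity) (pow_le_one₀ (by norm_num) (by norm_num)) (by omega)

/-- Bound for each class that is neither the zero vector nor equidistributed: the first summand
covers the neighbourhood of the point mass at `0`, the second one everything else. -/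
lemma classMass_bound (e p : ℕ) [Fact p.Prime] (he : 1 ≤ e) (hgcd : Nat.gcd p (e + 2) = 1) :
    ∃ b₀ K : ℝ, 0 < b₀ ∧ 0 < K ∧ ∀ b, b₀ ≤ b → ∀ (n : ℕ) (c : ZMod p → ℕ), 2 ≤ n →
      ∑ z, c z = n → 0 < ∑ z ∈ univ.erase 0, c z →
      b * Real.log n / n < ∑ z, ((c z : ℝ) / n - 1 / p) ^ 2 →
      classMass n (e + 2) p c ≤
        K / n ^ e * ((1 / 2) ^ (∑ z ∈ univ.erase 0, c z) + 1 / n ^ p) := by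
  obtain ⟨K, hK, hmass⟩ := classMass_le (e + 2) p (by omega)
  have hp1 : (1 : ℝ) ≤ p := by exact_mod_cast (Fact.out : p.Prime).one_le
  have hp0 : (0 : ℝ) < p := by linarith
  set E : ℝ := Real.exp (p ^ (e + 2)) with hE
  have hE1 : 1 ≤ E := Real.one_le_exp (by positivity)
  set δ : ℝ := 1 / (16 * p * E ^ 2) with hδ
  have hδ0 : 0 < δ := by positivity
  have hδp : δ ≤ 1 / (4 * p) := by
    rw [hδ]
    refine one_div_le_one_div_of_le (by positivity) ?_
    nlinarith [mul_le_mul_of_nonneg_left (one_le_pow₀ hE1 (n := 2)) hp0.le]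
  set κ : ℝ := 16 * p ^ 3 * (e + 2 : ℕ) / δ ^ e with hκ
  have hκ0 : 0 < κ := by positivity
  refine ⟨κ * (p + e), K * (16 * E ^ 2) ^ e, by positivity, by positivity, ?_⟩
  intro b hb n c hn hc hm hdev
  have hn0 : 0 < n := by omega
  have hnr : (0 : ℝ) < n := by exact_mod_cast hn0
  have hn1 : (1 : ℝ) ≤ n := by exact_mod_cast hn0
  set m := ∑ z ∈ univ.erase 0, c z with hmdef
  have h16 : 1 ≤ (16 * E ^ 2) ^ e := one_le_pow₀ (by nlinarith)
  refine (hmass n c hn0 hc).trans ?_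
  rw [mul_div_assoc, mul_assoc]
  refine mul_le_mul_of_nonneg_left ?_ hK.le
  by_cases hfar : ∃ z, z ≠ 0 ∧ δ ≤ (c z : ℝ) / n
  · obtain ⟨z₀, hz₀, hz⟩ := hfar
    have hsum : ∑ z, (c z : ℝ) / n = 1 := by
      rw [← Finset.sum_div, ← Nat.cast_sum, hc, div_self hnr.ne']
    have hst := stability e p he hgcd (fun z => (c z : ℝ) / n) (fun z => by positivity) hsum hδ0
      hδp hz₀ hz
    rw [← hκ] at hst
    refine (entropy_mul_card_le n (e + 2) p (by omega) c).trans ?_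
    have hQ0 : 0 ≤ genQ (e + 2) p (xpt (e + 2) fun z => (c z : ℝ) / n) :=
      Finset.sum_nonneg fun a _ => Finset.prod_nonneg fun i _ => by unfold xpt; positivity
    set Q := genQ (e + 2) p (xpt (e + 2) fun z => (c z : ℝ) / n)
    have hlog : 0 ≤ Real.log n := Real.log_nonneg hn1
    have hexp : (p + e) * Real.log n ≤ n * (1 - Q) := by
      have h1 : κ * (p + e) * Real.log n / n ≤ κ * (1 - Q) :=
        calc _ ≤ b * Real.log n / n := by gcongr
          _ ≤ _ := hdev.le.trans hst
      rw [div_le_iff₀ hnr] at h1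
      refine le_of_mul_le_mul_left ?_ hκ0
      linarith
    calc Q ^ n ≤ Real.exp (-(1 - Q)) ^ n := by
          gcongr
          have := Real.add_one_le_exp (-(1 - Q))
          linarith
      _ = Real.exp (-(n * (1 - Q))) := by rw [← Real.exp_nat_mul]; congr 1; ring
      _ ≤ Real.exp (-((p + e : ℕ) * Real.log n)) := by
          push_cast
          gcongr
      _ = 1 / n ^ e * (1 / n ^ p) := by
          rw [Real.exp_neg, Real.exp_nat_mul, Real.exp_log hnr, pow_add]
          field_simp
      _ ≤ (16 * E ^ 2) ^ e / n ^ e * ((1 / 2) ^ m + 1 / n ^ p) := by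
          gcongr
          have : (0 : ℝ) ≤ (1 / 2) ^ m := by positivity
          linarith
  · push Not at hfar
    by_cases hm1 : m = 1
    · -- a single nonzero coordinate `z` would have to satisfy `z = 0`
      have hempty : colSet n (e + 2) p c = ∅ := by
        by_contra hne
        have h0 := sum_eq_zero_of_colSet_nonempty n (e + 2) p hgcd c
          (Finset.nonempty_iff_ne_empty.2 hne)
        obtain ⟨z₁, hz₁, hcz₁⟩ : ∃ z ∈ univ.erase (0 : ZMod p), c z ≠ 0 := by
          by_contra hcon
          push Not at hcon
          rw [hmdef, Finset.sum_eq_zero hcon] at hm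
          exact lt_irrefl _ hm
        have hrest := Finset.add_sum_erase _ c hz₁
        rw [← hmdef, hm1] at hrest
        have hc1 : c z₁ = 1 := by omega
        have hr0 : ∑ z ∈ (univ.erase 0).erase z₁, c z = 0 := by omega
        rw [Finset.sum_eq_zero_iff] at hr0
        rw [← Finset.add_sum_erase univ _ (mem_univ 0), ← Finset.add_sum_erase _ _ hz₁,
          Finset.sum_eq_zero fun z hz => by rw [hr0 z hz]; simp, hc1] at h0
        simp at h0
        exact ne_of_mem_erase hz₁ h0
      rw [hempty]
      simp only [card_empty, Nat.cast_zero, mul_zero]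
      positivity
    · have hmδ : E ^ 2 * ((m : ℝ) / n) ≤ 1 / 16 := by
        have h1 : (m : ℝ) / n ≤ p * δ := by
          rw [hmdef, Nat.cast_sum, Finset.sum_div]
          calc _ ≤ ∑ z ∈ univ.erase (0 : ZMod p), δ :=
                Finset.sum_le_sum fun z hz => (hfar z (ne_of_mem_erase hz)).le
            _ ≤ ∑ _z : ZMod p, δ :=
                Finset.sum_le_sum_of_subset_of_nonneg (Finset.erase_subset _ _)
                  fun _ _ _ => hδ0.le
            _ = p * δ := by simp [ZMod.card]
        calc _ ≤ E ^ 2 * (p * δ) := by gcongr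
          _ = 1 / 16 := by rw [hδ]; field_simp
      refine (entropy_mul_card_le_near n (e + 2) p (by omega) c hn0 hc hmdef.symm hm).trans ?_
      rw [← hE, Nat.add_sub_cancel]
      refine (near_numeric he hE1 hn0 (by omega) hmδ).trans ?_
      gcongr
      have : (0 : ℝ) ≤ 1 / n ^ p := by positivity
      linarith

/-! ### Summation over the classes -/

/-- The identification of `{0, …, p - 1}` with `ZMod p` implicit in the indexing of counting
vectors. -/
def finZ (p : ℕ) [NeZero p] : Fin p ≃ ZMod p where
  toFun j := ((j : ℕ) : ZMod p)
  invFun z := ⟨z.val, ZMod.val_lt z⟩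
  left_inv j := Fin.ext (ZMod.val_natCast_of_lt j.2)
  right_inv z := ZMod.natCast_zmod_val z

lemma finZ_zero (p : ℕ) [NeZero p] : finZ p 0 = 0 := by simp [finZ]

lemma sum_finZ_symm (n p : ℕ) [NeZero p] {ν : Fin p → ℕ}
    (hν : ν ∈ Finset.Nat.antidiagonalTuple p n) : ∑ z, ν ((finZ p).symm z) = n := by
  rw [Equiv.sum_comp, Finset.Nat.mem_antidiagonalTuple.1 hν]

lemma card_antidiagonalTuple_le (n p : ℕ) :
    #(Finset.Nat.antidiagonalTuple p n) ≤ (n + 1) ^ p := by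
  calc _ ≤ #(Fintype.piFinset fun _ : Fin p => range (n + 1)) := by
        refine Finset.card_le_card fun ν hν => ?_
        rw [Finset.Nat.mem_antidiagonalTuple] at hν
        simp only [Fintype.mem_piFinset, mem_range, Nat.lt_succ_iff]
        intro j
        rw [← hν]
        exact Finset.single_le_sum (fun _ _ => Nat.zero_le _) (mem_univ j)
    _ = _ := by simp

/-- Dropping the zeroth coordinate is injective on tuples of sum `n`, so the sum is at most a product
of geometric series. -/
lemma sum_geometric_le (n p : ℕ) [NeZero p] :
    ∑ ν ∈ Finset.Nat.antidiagonalTuple p n,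
      (1 / 2 : ℝ) ^ (∑ z ∈ univ.erase 0, ν ((finZ p).symm z)) ≤ 2 ^ p := by
  let g : (Fin p → ℕ) → (ZMod p → ℕ) := fun ν z => if z = 0 then 0 else ν ((finZ p).symm z)
  have hginj : Set.InjOn g (Finset.Nat.antidiagonalTuple p n) := by
    intro ν hν ν' hν' h
    have hz : ∀ z ∈ univ.erase (0 : ZMod p), ν ((finZ p).symm z) = ν' ((finZ p).symm z) := by
      intro z hz
      have := congrFun h z
      simpa [g, ne_of_mem_erase hz] using this
    have h1 := sum_finZ_symm n p hν
    have h2 := sum_finZ_symm n p hν'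
    rw [← Finset.add_sum_erase univ _ (mem_univ 0)] at h1 h2
    rw [Finset.sum_congr rfl hz] at h1
    funext j
    obtain ⟨z, rfl⟩ := (finZ p).symm.surjective j
    by_cases hz0 : z = 0
    · subst hz0; omega
    · exact hz z (by simp [hz0])
  have hterm : ∀ ν : Fin p → ℕ, (1 / 2 : ℝ) ^ (∑ z ∈ univ.erase 0, ν ((finZ p).symm z)) =
      ∏ z, (1 / 2 : ℝ) ^ g ν z := by
    intro ν
    rw [Finset.prod_pow_eq_pow_sum, ← Finset.add_sum_erase univ (g ν) (mem_univ 0)]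
    congr 1
    simp only [g, if_true, zero_add]
    exact Finset.sum_congr rfl fun z hz => by rw [if_neg (ne_of_mem_erase hz)]
  rw [Finset.sum_congr rfl fun ν _ => hterm ν,
    ← Finset.sum_image (g := g) (f := fun c => ∏ z, (1 / 2 : ℝ) ^ c z) hginj]
  calc _ ≤ ∑ c ∈ Fintype.piFinset fun _ : ZMod p => range (n + 1), ∏ z, (1 / 2 : ℝ) ^ c z := by
        refine Finset.sum_le_sum_of_subset_of_nonneg ?_ fun c _ _ => by positivity
        intro c hc
        obtain ⟨ν, hν, rfl⟩ := Finset.mem_image.1 hc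
        simp only [Fintype.mem_piFinset, mem_range, Nat.lt_succ_iff, g]
        intro z
        split_ifs
        · exact Nat.zero_le _
        · rw [← Finset.Nat.mem_antidiagonalTuple.1 hν]
          exact Finset.single_le_sum (fun _ _ => Nat.zero_le _) (mem_univ _)
    _ = ∏ _z : ZMod p, ∑ k ∈ range (n + 1), (1 / 2 : ℝ) ^ k :=
        (Finset.prod_univ_sum (fun _ : ZMod p => range (n + 1)) fun _ k => (1 / 2 : ℝ) ^ k).symm
    _ ≤ ∏ _z : ZMod p, (2 : ℝ) := by
        refine Finset.prod_le_prod (fun _ _ => by positivity) fun _ _ => ?_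
        exact sum_geometric_two_le _
    _ = _ := by simp [ZMod.card]

end NonEquidist

/-- **large deviation estimate, non-equidistributed class.** For fixed `d ≥ 3`
and a prime `p` with `gcd(p,d)=1`, there is `𝔟₀ > 0` so that for every `𝔟 ≥ 𝔟₀` there is
`C > 0` with: for all `n ≥ 2`, the normalized number of pairs `(v, 𝒫)` where the counting
vector of `v` is neither `(n,0,…,0)` nor `𝔟`-equidistributed and `A(𝒫)·v = 0` in `F_p` is
at most `C / n^{d-2}`. -/
theorem stmt6 (d p : ℕ) (hd : 3 ≤ d) [Fact p.Prime] (hgcd : Nat.gcd p d = 1) :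
    ∃ b₀ : ℝ, 0 < b₀ ∧ ∀ b : ℝ, b₀ ≤ b → ∃ C : ℝ, 0 < C ∧ ∀ n : ℕ, 2 ≤ n →
      (∑ ν ∈ (Finset.Nat.antidiagonalTuple p n).filter
            (fun ν => ν ≠ (fun j : Fin p => if j = 0 then n else 0) ∧
              ¬ (∑ j, ((ν j : ℝ) / n - 1 / p) ^ 2 ≤ b * Real.log n / n)),
          ∑ v ∈ Finset.univ.filter
              (fun v : Fin n → ZMod p => ∀ j : Fin p, phi v ((j : ℕ) : ZMod p) = ν j),
            (Nat.card {P : Equiv.Perm (Fin n × Fin d) //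
                ((adjMat n d P).map (Int.cast : ℤ → ZMod p)).mulVec v = 0} : ℝ))
          / (Nat.factorial (n * d) : ℝ)
        ≤ C / (n : ℝ) ^ (d - 2) := by
  obtain ⟨e, rfl⟩ : ∃ e, d = e + 2 := ⟨d - 2, by omega⟩
  obtain ⟨b₀, K, hb₀, hK, hbound⟩ := NonEquidist.classMass_bound e p (by omega) hgcd
  refine ⟨b₀, hb₀, fun b hb => ⟨K * (2 ^ p + 2 ^ p), by positivity, fun n hn => ?_⟩⟩
  have hnr : (0 : ℝ) < n := by
    have : 0 < n := by omega
    exact_mod_cast this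
  have hn1 : (1 : ℝ) ≤ n := by
    have : 1 ≤ n := by omega
    exact_mod_cast this
  rw [Finset.sum_div, Nat.add_sub_cancel]
  have hterm : ∀ ν ∈ (Finset.Nat.antidiagonalTuple p n).filter
            (fun ν => ν ≠ (fun j : Fin p => if j = 0 then n else 0) ∧
              ¬ (∑ j, ((ν j : ℝ) / n - 1 / p) ^ 2 ≤ b * Real.log n / n)),
      (∑ v ∈ Finset.univ.filter
              (fun v : Fin n → ZMod p => ∀ j : Fin p, phi v ((j : ℕ) : ZMod p) = ν j),
            (Nat.card {P : Equiv.Perm (Fin n × Fin (e + 2)) //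
                ((adjMat n (e + 2) P).map (Int.cast : ℤ → ZMod p)).mulVec v = 0} : ℝ))
          / (Nat.factorial (n * (e + 2)) : ℝ) ≤
        K / n ^ e * ((1 / 2) ^ (∑ z ∈ Finset.univ.erase 0, ν ((NonEquidist.finZ p).symm z)) +
          1 / n ^ p) := by
    intro ν hν
    obtain ⟨hνn, hν0, hνdev⟩ := Finset.mem_filter.1 hν
    have hsum := NonEquidist.sum_finZ_symm n p hνn
    have hpos : 0 < ∑ z ∈ Finset.univ.erase 0, ν ((NonEquidist.finZ p).symm z) := by
      by_contra hcon
      have hz : ∑ z ∈ Finset.univ.erase 0, ν ((NonEquidist.finZ p).symm z) = 0 := by omega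
      refine hν0 (funext fun j => ?_)
      obtain ⟨z, rfl⟩ := (NonEquidist.finZ p).symm.surjective j
      have hzero : (NonEquidist.finZ p).symm z = 0 ↔ z = 0 := by
        rw [Equiv.symm_apply_eq, NonEquidist.finZ_zero]
      rw [← Finset.add_sum_erase Finset.univ _ (Finset.mem_univ 0), hz, add_zero] at hsum
      by_cases h0 : z = 0
      · rw [if_pos (hzero.2 h0), h0, hsum]
      · rw [if_neg (fun h => h0 (hzero.1 h))]
        exact Finset.sum_eq_zero_iff.1 hz z (by simp [h0])
    have hdev : b * Real.log n / n <
        ∑ z, ((ν ((NonEquidist.finZ p).symm z) : ℝ) / n - 1 / p) ^ 2 := by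
      rw [Equiv.sum_comp (NonEquidist.finZ p).symm fun j => ((ν j : ℝ) / n - 1 / p) ^ 2]
      exact not_le.1 hνdev
    refine le_trans (le_of_eq ?_)
      (hbound b hb n (fun z => ν ((NonEquidist.finZ p).symm z)) hn hsum hpos hdev)
    rw [NonEquidist.classMass]
    congr 1
    refine Finset.sum_congr (Finset.filter_congr fun v _ => ?_) fun _ _ => rfl
    have hcast : ∀ j : Fin p, ((j : ℕ) : ZMod p) = NonEquidist.finZ p j := fun _ => rfl
    constructor
    · intro h z
      have hz := h ((NonEquidist.finZ p).symm z)
      rwa [hcast, Equiv.apply_symm_apply] at hz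
    · intro h j
      rw [hcast, h, Equiv.symm_apply_apply]
  refine (Finset.sum_le_sum hterm).trans ?_
  refine (Finset.sum_le_sum_of_subset_of_nonneg (Finset.filter_subset _ _)
    fun ν _ _ => by positivity).trans ?_
  rw [← Finset.mul_sum, Finset.sum_add_distrib, Finset.sum_const, nsmul_eq_mul]
  have h1 := NonEquidist.sum_geometric_le n p
  have h2 : ((Finset.Nat.antidiagonalTuple p n).card : ℝ) * (1 / n ^ p) ≤ 2 ^ p := by
    have h3 : ((Finset.Nat.antidiagonalTuple p n).card : ℝ) ≤ (n + 1) ^ p := by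
      exact_mod_cast NonEquidist.card_antidiagonalTuple_le n p
    rw [mul_one_div, div_le_iff₀ (by positivity), ← mul_pow]
    refine h3.trans ?_
    gcongr
    linarith
  calc _ ≤ K / n ^ e * (2 ^ p + 2 ^ p) := by gcongr
    _ = _ := by ring
end

section
/- Let d ≥ 3 be an integer and p a prime. Let α : T_{d,p} → [0,∞) and let 𝔫 = (𝔫_0,…,𝔫_{p−1}) ∈ [0,∞)^p with Σ_{j=0}^{p−1} 𝔫_j = 1, and suppose Σ_{a ∈ T_{d,p}} α_a · Φ(a) = d·(𝔫_0,…,𝔫_{p−1}). Then −Σ_{a ∈ T_{d,p}} α_a ln α_a + (d−1) Σ_{j=0}^{p−1} 𝔫_j ln 𝔫_j ≤ 0 (with the convention 0·ln 0 = 0). -/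
/-- Summing a function over the coordinates of `a` is integrating it against `Φ(a)`. -/
lemma sum_phi_mul {p k : ℕ} [NeZero p] (a : Fin k → ZMod p) (f : ZMod p → ℝ) :
    ∑ j, (phi a j : ℝ) * f j = ∑ i, f (a i) := by
  rw [← Finset.sum_fiberwise' Finset.univ a f]
  refine Finset.sum_congr rfl fun j _ => ?_
  simp [phi, Nat.card_eq_fintype_card, Fintype.card_subtype]

/-- Pointwise form of Gibbs' inequality. -/
lemma sub_le_mul_log_sub {x y : ℝ} (hx : 0 ≤ x) (hy : 0 ≤ y) (h : 0 < x → 0 < y) :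
    x - y ≤ x * Real.log x - x * Real.log y := by
  rcases hx.eq_or_lt with rfl | hx
  · simpa using hy
  · have hy' := h hx
    have h1 := Real.log_le_sub_one_of_pos (div_pos hy' hx)
    rw [Real.log_div hy'.ne' hx.ne'] at h1
    have h2 := mul_le_mul_of_nonneg_left h1 hx.le
    have h3 : x * (y / x - 1) = y - x := by field_simp
    linarith

/-- The product weight that omits coordinate `i` has mass at most one on `T_{n+1,p}`, since
forgetting coordinate `i` is injective there. -/
lemma sum_prod_succAbove_le_one {n p : ℕ} [NeZero p] (m : ZMod p → ℝ) (hm : ∀ j, 0 ≤ m j)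
    (hmsum : ∑ j, m j = 1) (i : Fin (n + 1)) :
    ∑ a ∈ Tset (n + 1) p, ∏ k : Fin n, m (a (i.succAbove k)) ≤ 1 := by
  have hinj : Set.InjOn (fun (a : Fin (n + 1) → ZMod p) (k : Fin n) => a (i.succAbove k))
      (Tset (n + 1) p) := by
    intro a ha b hb hab
    have hab' : ∀ k, a (i.succAbove k) = b (i.succAbove k) := fun k => congrFun hab k
    simp only [Tset, Finset.coe_filter, Finset.mem_univ, true_and, Set.mem_ofPred_eq,
      Fin.sum_univ_succAbove _ i] at ha hb
    funext k
    rcases Fin.eq_self_or_eq_succAbove i k with rfl | ⟨l, rfl⟩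
    · simp only [hab'] at ha
      exact add_right_cancel (ha.trans hb.symm)
    · exact hab' l
  calc ∑ a ∈ Tset (n + 1) p, ∏ k : Fin n, m (a (i.succAbove k))
      = ∑ b ∈ (Tset (n + 1) p).image
          (fun (a : Fin (n + 1) → ZMod p) (k : Fin n) => a (i.succAbove k)), ∏ k, m (b k) :=
        (Finset.sum_image (f := fun b : Fin n → ZMod p => ∏ k, m (b k)) hinj).symm
    _ ≤ ∑ b : Fin n → ZMod p, ∏ k, m (b k) :=
        Finset.sum_le_sum_of_subset_of_nonneg (Finset.subset_univ _)
          fun b _ _ => Finset.prod_nonneg fun k _ => hm _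
    _ = 1 := by
        rw [← Fintype.prod_sum fun (_ : Fin n) j => m j]
        simp [hmsum]

/-- **rate function is nonpositive.** Let `d ≥ 3`, `p` prime. If
`α : T_{d,p} → [0,∞)` and `𝔫 ∈ [0,∞)^p` with `∑_j 𝔫_j = 1` satisfy
`∑_a α_a Φ(a) = d·𝔫`, then `-∑_a α_a ln α_a + (d-1) ∑_j 𝔫_j ln 𝔫_j ≤ 0`
(with `0·ln 0 = 0`, which is automatic since `Real.log 0 = 0`). -/
theorem stmt7 (d p : ℕ) (hd : 3 ≤ d) [Fact p.Prime]
    (α : (Fin d → ZMod p) → ℝ) (hα : ∀ a ∈ Tset d p, 0 ≤ α a)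
    (m : ZMod p → ℝ) (hm : ∀ j, 0 ≤ m j) (hmsum : ∑ j, m j = 1)
    (hc : ∀ j : ZMod p, ∑ a ∈ Tset d p, α a * (phi a j : ℝ) = d * m j) :
    -∑ a ∈ Tset d p, α a * Real.log (α a)
        + ((d : ℝ) - 1) * ∑ j : ZMod p, m j * Real.log (m j) ≤ 0 := by
  obtain ⟨n, rfl⟩ : ∃ n, d = n + 1 := ⟨d - 1, by omega⟩
  have hn : (0 : ℝ) < (n : ℝ) + 1 := by positivity
  push_cast at hc ⊢
  -- Integrate a function of one coordinate against the constraint.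
  have key : ∀ f : ZMod p → ℝ,
      ∑ a ∈ Tset (n + 1) p, α a * ∑ i, f (a i) = (n + 1) * ∑ j, m j * f j := by
    intro f
    calc ∑ a ∈ Tset (n + 1) p, α a * ∑ i, f (a i)
        = ∑ a ∈ Tset (n + 1) p, ∑ j, α a * (phi a j : ℝ) * f j := by
          refine Finset.sum_congr rfl fun a _ => ?_
          rw [← sum_phi_mul, Finset.mul_sum]
          simp only [mul_assoc]
      _ = ∑ j, ((n + 1) * m j) * f j := by
          rw [Finset.sum_comm]
          simp only [← Finset.sum_mul, hc]
      _ = _ := by simp only [Finset.mul_sum, mul_assoc]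
  have hsum : ∑ a ∈ Tset (n + 1) p, α a = 1 := by
    have h := key fun _ => 1
    simp only [Finset.sum_const, Finset.card_univ, Fintype.card_fin, nsmul_eq_mul, mul_one,
      hmsum, ← Finset.sum_mul] at h
    push_cast at h
    exact mul_right_cancel₀ hn.ne' (by linarith)
  have hpos : ∀ a ∈ Tset (n + 1) p, 0 < α a → ∀ i, 0 < m (a i) := by
    intro a ha hαa i
    have hphi : 0 < (phi a (a i) : ℝ) := by
      have : Nonempty {k // a k = a i} := ⟨⟨i, rfl⟩⟩
      exact_mod_cast (Nat.card_pos : 0 < Nat.card {k // a k = a i})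
    have h1 : α a * (phi a (a i) : ℝ) ≤ (n + 1) * m (a i) := by
      rw [← hc]
      exact Finset.single_le_sum (f := fun b => α b * (phi b (a i) : ℝ))
        (fun b hb => mul_nonneg (hα b hb) (Nat.cast_nonneg _)) ha
    exact pos_of_mul_pos_right (lt_of_lt_of_le (mul_pos hαa hphi) h1) hn.le
  have gibbs : ∀ i : Fin (n + 1),
      ∑ a ∈ Tset (n + 1) p, α a * ∑ k : Fin n, Real.log (m (a (i.succAbove k)))
        ≤ ∑ a ∈ Tset (n + 1) p, α a * Real.log (α a) := by
    intro i
    have h1 := Finset.sum_le_sum fun a (ha : a ∈ Tset (n + 1) p) =>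
      sub_le_mul_log_sub (hα a ha)
        (Finset.prod_nonneg fun k _ => hm (a (i.succAbove k)) :
          0 ≤ ∏ k : Fin n, m (a (i.succAbove k)))
        fun h => Finset.prod_pos fun k _ => hpos a ha h _
    rw [Finset.sum_sub_distrib, Finset.sum_sub_distrib, hsum] at h1
    have h2 := sum_prod_succAbove_le_one m hm hmsum i
    have h3 : ∑ a ∈ Tset (n + 1) p, α a * Real.log (∏ k : Fin n, m (a (i.succAbove k)))
        = ∑ a ∈ Tset (n + 1) p, α a * ∑ k : Fin n, Real.log (m (a (i.succAbove k))) := by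
      refine Finset.sum_congr rfl fun a ha => ?_
      rcases (hα a ha).eq_or_lt with h | h
      · simp [← h]
      · rw [Real.log_prod fun k _ => (hpos a ha h _).ne']
    linarith
  -- Over all choices of the omitted coordinate, each coordinate is counted `n` times.
  have count : ∀ a : Fin (n + 1) → ZMod p,
      ∑ i : Fin (n + 1), ∑ k : Fin n, Real.log (m (a (i.succAbove k)))
        = n * ∑ i, Real.log (m (a i)) := by
    intro a
    have h : ∀ i : Fin (n + 1), ∑ k : Fin n, Real.log (m (a (i.succAbove k)))
        = ∑ i, Real.log (m (a i)) - Real.log (m (a i)) := by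
      intro i
      rw [Fin.sum_univ_succAbove (fun j => Real.log (m (a j))) i]
      ring
    simp only [h, Finset.sum_sub_distrib, Finset.sum_const, Finset.card_univ, Fintype.card_fin,
      nsmul_eq_mul]
    push_cast
    ring
  have total := Finset.sum_le_sum fun i (_ : i ∈ (Finset.univ : Finset (Fin (n + 1)))) => gibbs i
  rw [Finset.sum_comm] at total
  simp only [← Finset.mul_sum, count, Finset.sum_const, Finset.card_univ, Fintype.card_fin,
    nsmul_eq_mul, mul_left_comm _ (n : ℝ)] at total
  rw [key fun j => Real.log (m j)] at total
  push_cast at total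
  rw [mul_left_comm] at total
  have := le_of_mul_le_mul_left total hn
  linarith
end

section
/- Let d ≥ 2 be an integer and p a prime. For any 𝔫 = (𝔫_0,…,𝔫_{p−1}) ∈ [0,∞)^p with Σ_{j=0}^{p−1} 𝔫_j = 1, one has Σ_{a ∈ T_{d,p}} ∏_{k=1}^{d} 𝔫_{a_k}^{(d−1)/d} ≤ 1, where the sum is over all d-tuples a = (a_1,…,a_d) ∈ F_p^d with a_1 + ⋯ + a_d = 0. -/
/-- AM–GM applied to the `n + 1` products that omit one of the factors `x i`. -/
theorem prod_rpow_le {n : ℕ} (x : Fin (n + 1) → ℝ) (hx : ∀ i, 0 ≤ x i) :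
    ∏ k, x k ^ ((n : ℝ) / (n + 1)) ≤
      ∑ k : Fin (n + 1), (1 / ((n : ℝ) + 1)) * ∏ i ∈ Finset.univ.erase k, x i := by
  have hnonneg : ∀ k : Fin (n + 1), 0 ≤ ∏ i ∈ Finset.univ.erase k, x i :=
    fun k => Finset.prod_nonneg fun i _ => hx i
  have amgm := Real.geom_mean_le_arith_mean_weighted Finset.univ
    (fun _ : Fin (n + 1) => 1 / ((n : ℝ) + 1))
    (fun k => ∏ i ∈ Finset.univ.erase k, x i) (fun _ _ => by positivity)
    (by simp; field_simp) (fun k _ => hnonneg k)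
  refine le_of_eq_of_le ?_ amgm
  -- Each `x i` occurs in exactly the `n` products indexed by `k ≠ i`.
  have count : ∏ k, ∏ i ∈ Finset.univ.erase k, x i = ∏ i, x i ^ n := by
    rw [Finset.prod_comm' (t' := Finset.univ) (s' := fun i => Finset.univ.erase i)
      (by intro a b; simp [eq_comm])]
    simp
  rw [Real.finsetProd_rpow _ _ (fun k _ => hnonneg k), count,
    ← Real.finsetProd_rpow _ _ (fun i _ => pow_nonneg (hx i) n)]
  refine Finset.prod_congr rfl fun i _ => ?_
  rw [← Real.rpow_natCast, ← Real.rpow_mul (hx i), mul_one_div]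

/-- Deleting the `k`-th coordinate is a bijection from `T_{n+1,p}` onto all `n`-tuples, its inverse
inserting minus the sum of the remaining coordinates. -/
theorem sum_Tset_prod_erase {n p : ℕ} [NeZero p] (m : ZMod p → ℝ) (k : Fin (n + 1)) :
    ∑ a ∈ Tset (n + 1) p, ∏ i ∈ Finset.univ.erase k, m (a i) = (∑ j, m j) ^ n := by
  have hpow : (∑ j, m j) ^ n = ∑ b : Fin n → ZMod p, ∏ i, m (b i) := by
    rw [← Fintype.prod_sum (fun (_ : Fin n) j => m j)]
    simp
  rw [hpow]
  refine Finset.sum_bij' (fun a _ => k.removeNth a)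
    (fun b _ => k.insertNth (-∑ i, b i) b) (fun _ _ => Finset.mem_univ _) ?_ ?_ ?_ ?_
  · intro b _
    simp [Tset, Fin.sum_univ_succAbove _ k]
  · intro a ha
    have hsum : a k + ∑ i, a (k.succAbove i) = 0 := by
      simpa [Tset, Fin.sum_univ_succAbove _ k] using ha
    have hk : -∑ i, k.removeNth a i = a k := by
      simpa [Fin.removeNth] using (eq_neg_of_add_eq_zero_left hsum).symm
    simp only [hk]
    exact Fin.insertNth_self_removeNth k a
  · intro b _
    simp
  · intro a _
    have herase : Finset.univ.erase k = Finset.univ.map k.succAboveEmb := by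
      ext i
      simp [Fin.exists_succAbove_eq_iff]
    simp [herase, Fin.removeNth]

/-- **AM–GM estimate.** Let `d ≥ 2` and `p` prime. For any
`𝔫 ∈ [0,∞)^p` with `∑_j 𝔫_j = 1`, one has
`∑_{a ∈ T_{d,p}} ∏_{k=1}^d 𝔫_{a_k}^{(d-1)/d} ≤ 1`. -/
theorem stmt10 (d p : ℕ) (hd : 2 ≤ d) [Fact p.Prime]
    (m : ZMod p → ℝ) (hm : ∀ j, 0 ≤ m j) (hmsum : ∑ j, m j = 1) :
    ∑ a ∈ Tset d p, ∏ k : Fin d, (m (a k)) ^ (((d : ℝ) - 1) / d) ≤ 1 := by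
  obtain ⟨n, rfl⟩ : ∃ n, d = n + 1 := ⟨d - 1, by omega⟩
  have hexp : (((n + 1 : ℕ) : ℝ) - 1) / ((n + 1 : ℕ) : ℝ) = (n : ℝ) / (n + 1) := by
    push_cast
    ring
  rw [hexp]
  calc _ ≤ ∑ a ∈ Tset (n + 1) p, ∑ k : Fin (n + 1),
          (1 / ((n : ℝ) + 1)) * ∏ i ∈ Finset.univ.erase k, m (a i) :=
        Finset.sum_le_sum fun a _ => prod_rpow_le (fun k => m (a k)) fun k => hm (a k)
    _ = 1 := by
        rw [Finset.sum_comm]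
        simp only [← Finset.mul_sum, sum_Tset_prod_erase, hmsum]
        simp
        field_simp
end

section
/- Let d ≥ 3 be an integer and p a prime with gcd(p,d) = 1. Let 𝔫 = (𝔫_0,…,𝔫_{p−1}) ∈ [0,∞)^p with Σ_{j=0}^{p−1} 𝔫_j = 1, and suppose equality holds: Σ_{a ∈ T_{d,p}} ∏_{k=1}^{d} 𝔫_{a_k}^{(d−1)/d} = 1. Then either 𝔫_j = 1/p for all j ∈ {0,…,p−1}, or 𝔫_0 = 1 and 𝔫_1 = ⋯ = 𝔫_{p−1} = 0. -/
/-- For every position `k`, a tuple in `T_{n+1,p}` is determined by its other `n` coordinates,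
which are arbitrary; so the sum factors as the `n`-th power of `∑ m`. -/
theorem sum_Tset_prod_compl {n p : ℕ} [Fact p.Prime] (m : ZMod p → ℝ) (k : Fin (n + 1)) :
    ∑ a ∈ Tset (n + 1) p, ∏ l ∈ ({k}ᶜ : Finset (Fin (n + 1))), m (a l) = (∑ j, m j) ^ n := by
  rw [Fintype.sum_pow]
  refine Finset.sum_bij' (fun a _ => k.removeNth a)
    (fun b _ => k.insertNth (-∑ i, b i) b) ?_ ?_ ?_ ?_ ?_
  · simp
  · intro b _
    simp [Tset, Fin.sum_univ_succAbove _ k]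
  · intro a ha
    have h : a k + ∑ i, a (k.succAbove i) = 0 := by
      simpa [Tset, Fin.sum_univ_succAbove _ k] using ha
    have h' : -∑ i, k.removeNth a i = a k := (eq_neg_of_add_eq_zero_left h).symm
    rw [h']
    exact Fin.insertNth_self_removeNth k a
  · intro b _
    exact Fin.removeNth_insertNth (α := fun _ => ZMod p) k _ b
  · intro a _
    rw [← Fin.image_succAbove_univ, Finset.prod_image Fin.succAbove_right_injective.injOn]
    rfl

/-- The product of the `f k`, each raised to the power `(d - 1) / d`, is the geometric mean of
the `d` products obtained by leaving out one factor. -/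
theorem geomMean_eq {d : ℕ} (f : Fin d → ℝ) (hf : ∀ k, 0 ≤ f k) (hd : 1 ≤ d) :
    ∏ k, f k ^ (((d : ℝ) - 1) / d) =
      ∏ k, (∏ l ∈ ({k}ᶜ : Finset (Fin d)), f l) ^ (1 / (d : ℝ)) := by
  rw [Real.finsetProd_rpow _ _ (fun k _ => Finset.prod_nonneg fun l _ => hf l),
    Finset.prod_comm' (t' := Finset.univ) (s' := fun l => ({l}ᶜ : Finset (Fin d)))
      (by intro x y; simp [eq_comm]),
    ← Real.finsetProd_rpow _ _ (fun l _ => Finset.prod_nonneg fun _ _ => hf l)]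
  refine Finset.prod_congr rfl fun k _ => ?_
  rw [Finset.prod_const, Finset.card_compl, Finset.card_singleton, Fintype.card_fin,
    ← Real.rpow_natCast, ← Real.rpow_mul (hf k), Nat.cast_sub hd]
  congr 1
  push_cast
  ring

/-- Under the equality hypothesis, AM–GM is an equality at each tuple of `T_{n+1,p}`, so leaving
out any coordinate gives the same product. -/
theorem prod_compl_eq {n p : ℕ} [Fact p.Prime] (m : ZMod p → ℝ) (hm : ∀ j, 0 ≤ m j)
    (hmsum : ∑ j, m j = 1)
    (heq : ∑ a ∈ Tset (n + 1) p,
      ∏ k : Fin (n + 1), (m (a k)) ^ ((((n + 1 : ℕ) : ℝ) - 1) / (n + 1 : ℕ)) = 1)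
    {a : Fin (n + 1) → ZMod p} (ha : a ∈ Tset (n + 1) p) (k k' : Fin (n + 1)) :
    ∏ l ∈ ({k}ᶜ : Finset (Fin (n + 1))), m (a l) =
      ∏ l ∈ ({k'}ᶜ : Finset (Fin (n + 1))), m (a l) := by
  have hpos : (0 : ℝ) < 1 / ((n + 1 : ℕ) : ℝ) := by positivity
  have hw : ∑ _k : Fin (n + 1), 1 / ((n + 1 : ℕ) : ℝ) = 1 := by
    rw [Finset.sum_const, Finset.card_univ, Fintype.card_fin, nsmul_eq_mul]
    field_simp
  have hz (b : Fin (n + 1) → ZMod p) (k : Fin (n + 1)) :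
      0 ≤ ∏ l ∈ ({k}ᶜ : Finset (Fin (n + 1))), m (b l) :=
    Finset.prod_nonneg fun l _ => hm _
  have hle : ∀ b ∈ Tset (n + 1) p,
      ∏ k : Fin (n + 1), (m (b k)) ^ ((((n + 1 : ℕ) : ℝ) - 1) / (n + 1 : ℕ)) ≤
        ∑ k, 1 / ((n + 1 : ℕ) : ℝ) * ∏ l ∈ ({k}ᶜ : Finset (Fin (n + 1))), m (b l) := by
    intro b _
    rw [geomMean_eq (fun k => m (b k)) (fun k => hm _) (by omega)]
    exact Real.geom_mean_le_arith_mean_weighted Finset.univ _ _ (fun _ _ => hpos.le) hw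
      (fun k _ => hz b k)
  have hsum : ∑ b ∈ Tset (n + 1) p,
      ∑ k, 1 / ((n + 1 : ℕ) : ℝ) * ∏ l ∈ ({k}ᶜ : Finset (Fin (n + 1))), m (b l) = 1 := by
    rw [Finset.sum_comm]
    simp_rw [← Finset.mul_sum, sum_Tset_prod_compl, hmsum, one_pow]
    rw [Finset.mul_sum]
    simp_rw [mul_one]
    exact hw
  have h := (Finset.sum_eq_sum_iff_of_le hle).1 (heq.trans hsum.symm) a ha
  rw [geomMean_eq (fun k => m (a k)) (fun k => hm _) (by omega)] at h
  exact (Real.geom_mean_eq_arith_mean_weighted_iff_of_pos Finset.univ _ _ (fun _ _ => hpos) hw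
    (fun k _ => hz a k)).1 h k (Finset.mem_univ _) k' (Finset.mem_univ _)

/-- The support of `m` is stable under `(x, y, s) ↦ -(x + y + (d - 3) s)`, where `d = n + 3`, and
`m` is constant on it. -/
theorem support_closed {n p : ℕ} [Fact p.Prime] (m : ZMod p → ℝ) (hm : ∀ j, 0 ≤ m j)
    (hprod : ∀ a ∈ Tset (n + 3) p, ∀ k k' : Fin (n + 3),
      ∏ l ∈ ({k}ᶜ : Finset (Fin (n + 3))), m (a l) =
        ∏ l ∈ ({k'}ᶜ : Finset (Fin (n + 3))), m (a l))
    {x y s : ZMod p} (hx : 0 < m x) (hy : 0 < m y) (hs : 0 < m s) :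
    0 < m (-(x + y + n * s)) ∧ m x = m y := by
  set z := -(x + y + n * s) with hz
  set a : Fin (n + 3) → ZMod p := Fin.cons x (Fin.cons y (Fin.cons z fun _ => s)) with ha
  have ha0 : a 0 = x := rfl
  have ha1 : a 1 = y := rfl
  have ha2 : a 2 = z := rfl
  have haT : a ∈ Tset (n + 3) p := by
    simp only [Tset, Finset.mem_filter, Finset.mem_univ, true_and, ha, Fin.sum_cons,
      Finset.sum_const, Finset.card_univ, Fintype.card_fin, nsmul_eq_mul, hz]
    ring
  have hcases (l : Fin (n + 3)) (hl : l ≠ 2) : 0 < m (a l) := by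
    obtain rfl | ⟨l, rfl⟩ := l.eq_zero_or_eq_succ
    · exact hx
    obtain rfl | ⟨l, rfl⟩ := l.eq_zero_or_eq_succ
    · exact hy
    obtain rfl | ⟨l, rfl⟩ := l.eq_zero_or_eq_succ
    · exact absurd rfl hl
    · exact hs
  have h2 : 0 < ∏ l ∈ ({2}ᶜ : Finset (Fin (n + 3))), m (a l) :=
    Finset.prod_pos fun l hl => hcases l (by simpa using hl)
  -- The product omitting position `0` is also nonzero, and it contains the factor `m z`.
  have hzpos : 0 < m z := by
    have h0 := h2.ne'
    rw [hprod a haT 2 0, Finset.prod_ne_zero_iff] at h0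
    refine (hm z).lt_of_ne' (h0 2 ?_)
    rw [Finset.mem_compl, Finset.mem_singleton, Fin.ext_iff]
    simp [Nat.mod_eq_of_lt (show 2 < n + 3 by omega)]
  refine ⟨hzpos, ?_⟩
  have e0 := Fintype.prod_eq_mul_prod_compl (0 : Fin (n + 3)) fun l => m (a l)
  have e1 := Fintype.prod_eq_mul_prod_compl (1 : Fin (n + 3)) fun l => m (a l)
  rw [e0, ha0, ha1, hprod a haT 0 2, hprod a haT 1 2] at e1
  exact mul_right_cancel₀ h2.ne' e1

open scoped Pointwise in
/-- Cauchy–Davenport gives `|S + S| ≥ min p (2 |S| - 1)`, while `w ↦ -(w + c)` embeds `S + S`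
into `S`. -/
theorem eq_univ_of_neg_add_mem {p : ℕ} [Fact p.Prime] {S : Finset (ZMod p)} (hS : 1 < S.card)
    (c : ZMod p) (h : ∀ x ∈ S, ∀ y ∈ S, -(x + y + c) ∈ S) : S = Finset.univ := by
  have hne : S.Nonempty := Finset.card_pos.1 (by omega)
  have hcd := ZMod.cauchy_davenport Fact.out hne hne
  have hcard : (S + S).card ≤ S.card := by
    refine Finset.card_le_card_of_injOn (fun w => -(w + c)) ?_ ?_
    · intro w hw
      obtain ⟨x, hx, y, hy, rfl⟩ := Finset.mem_add.1 hw
      exact h x hx y hy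
    · intro u _ v _ huv
      simpa using huv
  refine Finset.eq_univ_of_card S (le_antisymm (Finset.card_le_univ S) ?_)
  rw [ZMod.card]
  omega

/-- **equality case of the AM–GM estimate.** Let `d ≥ 3` and `p` prime with
`gcd(p,d)=1`. If `𝔫 ∈ [0,∞)^p` with `∑_j 𝔫_j = 1` satisfies
`∑_{a ∈ T_{d,p}} ∏_{k=1}^d 𝔫_{a_k}^{(d-1)/d} = 1`, then either `𝔫_j = 1/p` for all `j`,
or `𝔫_0 = 1` and `𝔫_j = 0` for all `j ≠ 0`. -/
theorem stmt11 (d p : ℕ) (hd : 3 ≤ d) [Fact p.Prime] (hgcd : Nat.gcd p d = 1)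
    (m : ZMod p → ℝ) (hm : ∀ j, 0 ≤ m j) (hmsum : ∑ j, m j = 1)
    (heq : ∑ a ∈ Tset d p, ∏ k : Fin d, (m (a k)) ^ (((d : ℝ) - 1) / d) = 1) :
    (∀ j : ZMod p, m j = 1 / p) ∨ (m 0 = 1 ∧ ∀ j : ZMod p, j ≠ 0 → m j = 0) := by
  obtain ⟨n, rfl⟩ := Nat.exists_eq_add_of_le' hd
  have hp : p.Prime := Fact.out
  have key {x y s : ZMod p} (hx : 0 < m x) (hy : 0 < m y) (hs : 0 < m s) :=
    support_closed m hm (fun a ha k k' => prod_compl_eq (n := n + 2) m hm hmsum heq ha k k')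
      hx hy hs
  obtain ⟨s, hs⟩ : ∃ s, 0 < m s := by
    by_contra! h
    have := Finset.sum_nonpos fun j (_ : j ∈ Finset.univ) => h j
    linarith
  set S : Finset (ZMod p) := Finset.univ.filter fun j => 0 < m j with hS
  have memS (j : ZMod p) : j ∈ S ↔ 0 < m j := by simp [hS]
  by_cases h1 : ∀ j, 0 < m j → j = s
  · right
    have hds : ((n + 3 : ℕ) : ZMod p) * s = 0 := by
      have h := h1 _ (key hs hs hs).1
      push_cast
      linear_combination -h
    have hd0 : ((n + 3 : ℕ) : ZMod p) ≠ 0 := by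
      rw [Ne, ZMod.natCast_eq_zero_iff]
      exact (hp.coprime_iff_not_dvd).1 hgcd
    obtain rfl : s = 0 := (mul_eq_zero.1 hds).resolve_left hd0
    have hzero (j : ZMod p) (hj : j ≠ 0) : m j = 0 := by
      by_contra h
      exact hj (h1 j ((hm j).lt_of_ne' h))
    refine ⟨?_, hzero⟩
    rw [← hmsum]
    exact (Fintype.sum_eq_single 0 hzero).symm
  · left
    push Not at h1
    obtain ⟨t, ht, hts⟩ := h1
    have hSu : S = Finset.univ := eq_univ_of_neg_add_mem
      (Finset.one_lt_card.2 ⟨t, (memS t).2 ht, s, (memS s).2 hs, hts⟩) (n * s)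
      fun x hx y hy => (memS _).2 (key ((memS x).1 hx) ((memS y).1 hy) hs).1
    intro j
    have hall (i : ZMod p) : 0 < m i := (memS i).1 (hSu ▸ Finset.mem_univ i)
    have hconst (i : ZMod p) : m i = m j := (key (hall i) (hall j) hs).2
    rw [Finset.sum_congr rfl fun i _ => hconst i, Finset.sum_const, Finset.card_univ, ZMod.card,
      nsmul_eq_mul] at hmsum
    have hp0 : (p : ℝ) ≠ 0 := Nat.cast_ne_zero.2 hp.ne_zero
    rw [eq_div_iff hp0, mul_comm]
    exact hmsum
end

section
/- Let d ≥ 3 be an integer and p a prime. For any function ε : T_{d,p} → ℝ with Σ_{a ∈ T_{d,p}} ε_a = 0, one has ‖ Σ_{a ∈ T_{d,p}} ε_a · Φ(a) ‖₂² ≤ d·p^{d−2} · Σ_{a ∈ T_{d,p}} ε_a², where ‖·‖₂ is the Euclidean norm on ℝ^p. Equivalently, if d·(δ_0,…,δ_{p−1}) = Σ_a ε_a Φ(a), then Σ_{j=0}^{p−1} δ_j² ≤ (p^{d−2}/d) Σ_a ε_a². -/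
/-- `T_{d,p}` is invariant under translation by `t (e_i - e_m)`; this averages a sum over `T_{d,p}`
over all such translations. -/
lemma sum_average {d p : ℕ} [NeZero p] (i m : Fin d) (h : (Fin d → ZMod p) → ℝ) :
    (p : ℝ) * ∑ a ∈ Tset d p, h a =
      ∑ a ∈ Tset d p, ∑ t : ZMod p, h (a + (Pi.single i t - Pi.single m t)) := by
  rw [Finset.sum_comm]
  have key : ∀ t : ZMod p, ∑ a ∈ Tset d p, h (a + (Pi.single i t - Pi.single m t)) =
      ∑ a ∈ Tset d p, h a := by
    intro t
    refine Finset.sum_equiv (Equiv.addRight (Pi.single i t - Pi.single m t)) ?_ ?_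
    · intro a
      simp [Tset, Finset.sum_add_distrib]
    · intro a _
      rfl
  simp [key, ZMod.card]

/-- The level sets of `a ↦ ∑ i, a i` are translates of `T_{d,p}`. -/
lemma card_Tset {d p : ℕ} [NeZero p] (i : Fin d) : p * (Tset d p).card = p ^ d := by
  have h := Finset.card_eq_sum_card_fiberwise (s := (Finset.univ : Finset (Fin d → ZMod p)))
    (t := (Finset.univ : Finset (ZMod p))) (f := fun a => ∑ k, a k) (by simp)
  have key : ∀ t : ZMod p,
      (Finset.univ.filter (fun a : Fin d → ZMod p => ∑ k, a k = t)).card = (Tset d p).card := by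
    intro t
    refine Finset.card_equiv (Equiv.subRight (Pi.single i t)) ?_
    intro a
    simp [Tset, sub_eq_zero]
  simp only [key] at h
  simpa [ZMod.card] using h.symm

lemma sum_diag {d p : ℕ} [NeZero p] (hd : 3 ≤ d) (i : Fin d) (x : ZMod p → ℝ) :
    ∑ a ∈ Tset d p, x (a i) * x (a i) = (p : ℝ) ^ (d - 2) * ∑ j, x j ^ 2 := by
  have : Nontrivial (Fin d) := Fin.nontrivial_iff_two_le.2 (by omega)
  obtain ⟨m, hm⟩ := exists_ne i
  have hp : (p : ℝ) ≠ 0 := Nat.cast_ne_zero.2 (NeZero.ne p)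
  have h := sum_average i m (fun a : Fin d → ZMod p => x (a i) * x (a i))
  have key : ∀ a : Fin d → ZMod p, ∑ t : ZMod p, x (a i + t) * x (a i + t) = ∑ j, x j ^ 2 := by
    intro a
    rw [← Equiv.sum_comp (Equiv.addLeft (a i)) (fun j => x j ^ 2)]
    simp [sq]
  simp only [Pi.add_apply, Pi.sub_apply, Pi.single_eq_same, Pi.single_eq_of_ne hm.symm, sub_zero,
    key, Finset.sum_const, nsmul_eq_mul] at h
  have hc : (p : ℝ) * ((Tset d p).card : ℝ) = (p : ℝ) ^ d := by exact_mod_cast card_Tset i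
  have hpow : (p : ℝ) ^ d = p * p * (p : ℝ) ^ (d - 2) := by
    rw [← sq, ← pow_add]
    congr 1
    omega
  apply mul_left_cancel₀ (mul_ne_zero hp hp)
  linear_combination (p : ℝ) * h + (∑ j, x j ^ 2) * hc + (∑ j, x j ^ 2) * hpow

/-- A third index `m` lets the `i`-th coordinate run over `ℤ/p` with the `k`-th one fixed. -/
lemma sum_offdiag {d p : ℕ} [NeZero p] (hd : 3 ≤ d) {i k : Fin d} (hik : k ≠ i) (x : ZMod p → ℝ)
    (hx : ∑ j, x j = 0) : ∑ a ∈ Tset d p, x (a i) * x (a k) = 0 := by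
  obtain ⟨m, hmi, hmk⟩ : ∃ m : Fin d, m ≠ i ∧ m ≠ k := by
    obtain ⟨m, hm⟩ := Finset.exists_mem_notMem_of_card_lt_card
      (s := ({i, k} : Finset (Fin d))) (t := Finset.univ)
      (by rw [Finset.card_univ, Fintype.card_fin]; exact Finset.card_le_two.trans_lt hd)
    exact ⟨m, by simpa using hm⟩
  have hp : (p : ℝ) ≠ 0 := Nat.cast_ne_zero.2 (NeZero.ne p)
  have h := sum_average i m (fun a : Fin d → ZMod p => x (a i) * x (a k))
  have key : ∀ a : Fin d → ZMod p, ∑ t : ZMod p, x (a i + t) = 0 := by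
    intro a
    rw [← hx, ← Equiv.sum_comp (Equiv.addLeft (a i)) x]
    simp
  simp only [Pi.add_apply, Pi.sub_apply, Pi.single_eq_same, Pi.single_eq_of_ne hmi.symm,
    Pi.single_eq_of_ne hmk.symm, Pi.single_eq_of_ne hik, sub_zero, add_zero, ← Finset.sum_mul,
    key, zero_mul, Finset.sum_const_zero] at h
  exact (mul_eq_zero.1 h).resolve_left hp

lemma sum_sq {d p : ℕ} [NeZero p] (hd : 3 ≤ d) (x : ZMod p → ℝ) (hx : ∑ j, x j = 0) :
    ∑ a ∈ Tset d p, (∑ i, x (a i)) ^ 2 = (d : ℝ) * (p : ℝ) ^ (d - 2) * ∑ j, x j ^ 2 := by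
  simp only [sq (∑ i, x _), Finset.sum_mul_sum]
  rw [Finset.sum_comm]
  have key : ∀ i : Fin d, ∑ a ∈ Tset d p, ∑ k, x (a i) * x (a k) =
      (p : ℝ) ^ (d - 2) * ∑ j, x j ^ 2 := by
    intro i
    rw [Finset.sum_comm, Finset.sum_eq_single i (fun k _ hk => sum_offdiag hd hk x hx) (by simp),
      sum_diag hd]
  simp [key, mul_assoc]

lemma sum_mul_phi {d p : ℕ} [NeZero p] (x : ZMod p → ℝ) (a : Fin d → ZMod p) :
    ∑ j, x j * (phi a j : ℝ) = ∑ i, x (a i) := by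
  have h : ∀ j, (phi a j : ℝ) = ∑ i, if a i = j then 1 else 0 := by
    intro j
    rw [phi, Nat.card_eq_fintype_card, Fintype.card_subtype]
    simp
  simp only [h, Finset.mul_sum]
  rw [Finset.sum_comm]
  simp

/-- **Gram matrix / quadratic form bound.** Let `d ≥ 3` and `p` prime. For any
`ε : T_{d,p} → ℝ` with `∑_a ε_a = 0`, one has
`‖∑_a ε_a Φ(a)‖₂² ≤ d·p^{d-2} · ∑_a ε_a²`. -/
theorem stmt12 (d p : ℕ) (hd : 3 ≤ d) [Fact p.Prime]
    (ε : (Fin d → ZMod p) → ℝ) (hε : ∑ a ∈ Tset d p, ε a = 0) :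
    ∑ j : ZMod p, (∑ a ∈ Tset d p, ε a * (phi a j : ℝ)) ^ 2
      ≤ (d : ℝ) * (p : ℝ) ^ (d - 2) * ∑ a ∈ Tset d p, (ε a) ^ 2 := by
  set x : ZMod p → ℝ := fun j => ∑ a ∈ Tset d p, ε a * (phi a j : ℝ) with hxdef
  -- Pairing `x` with any vector `y` moves to `T_{d,p}` through the transpose.
  have dual : ∀ y : ZMod p → ℝ, ∑ j, y j * x j = ∑ a ∈ Tset d p, ε a * ∑ i, y (a i) := by
    intro y
    simp only [hxdef, Finset.mul_sum, ← sum_mul_phi]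
    rw [Finset.sum_comm]
    exact Finset.sum_congr rfl fun a _ => Finset.sum_congr rfl fun j _ => by ring
  have hx : ∑ j, x j = 0 := by
    have h := dual fun _ => 1
    rw [← Finset.sum_mul, hε, zero_mul] at h
    simpa using h
  have hS : ∑ j, x j ^ 2 = ∑ a ∈ Tset d p, ε a * ∑ i, x (a i) := by
    rw [← dual x]
    simp only [sq]
  have cs := Finset.sum_mul_sq_le_sq_mul_sq (Tset d p) ε (fun a => ∑ i, x (a i))
  rw [← hS, sum_sq hd x hx] at cs
  change ∑ j, x j ^ 2 ≤ _
  have h0 : 0 ≤ ∑ j, x j ^ 2 := Finset.sum_nonneg fun j _ => sq_nonneg _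
  rcases h0.eq_or_lt with h | h
  · rw [← h]
    positivity
  · refine le_of_mul_le_mul_right ?_ h
    linarith
end

section
/- Let d ≥ 3 be an integer, p a prime, and n, m nonnegative integers with m ≤ n. Let (n_0, n_1, …, n_{p−1}) be a p-tuple of nonnegative integers with n_0 = n − m and n_1 + ⋯ + n_{p−1} = m. Then #{ (a^{(1)},…,a^{(n)}) ∈ (T_{d,p})^n : Σ_{i=1}^n Φ(a^{(i)}) = (d n_0, d n_1, …, d n_{p−1}) } ≤ (p^{d−1}·n)^{dm/2}, where the right-hand side is the real power with exponent dm/2. -/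
lemma sum_phi_erase_zero {p k : ℕ} [NeZero p] (v : Fin k → ZMod p) :
    ∑ j ∈ Finset.univ.erase (0 : ZMod p), phi v j
      = (Finset.univ.filter fun i => v i ≠ 0).card := by
  classical
  rw [Finset.card_eq_sum_card_fiberwise (f := v) (t := Finset.univ.erase (0 : ZMod p))]
  · refine Finset.sum_congr rfl fun j hj => ?_
    rw [phi, Nat.card_eq_fintype_card, Fintype.card_subtype]
    congr 1
    ext i
    have hj' := Finset.ne_of_mem_erase hj
    simp only [Finset.mem_filter, Finset.mem_univ, true_and]
    exact ⟨fun h => ⟨h ▸ hj', h⟩, fun h => h.2⟩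
  · intro i hi
    simpa using hi

lemma two_le_card_ne_zero {p k : ℕ} (v : Fin k → ZMod p) (hs : ∑ i, v i = 0)
    (hv : v ≠ 0) : 2 ≤ (Finset.univ.filter fun i => v i ≠ 0).card := by
  classical
  obtain ⟨i, hi⟩ := Function.ne_iff.mp hv
  by_contra! hlt
  refine hi ?_
  have h1 : ∀ j, j ≠ i → v j = 0 := by
    intro j hj
    by_contra hne
    exact hj (Finset.card_le_one.mp (Nat.le_of_lt_succ hlt) j (by simpa using hne) i (by simpa using hi))
  rwa [Fintype.sum_eq_single i h1] at hs

/-- The number of nonzero rows is at most half the number of nonzero coordinates. -/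
lemma two_mul_card_support_le {d p n m : ℕ} [NeZero p] (ν : ZMod p → ℕ)
    (hνm : ∑ j ∈ Finset.univ.erase (0 : ZMod p), ν j = m) (a : Fin n → Fin d → ZMod p)
    (h0 : ∀ i, ∑ k, a i k = 0) (h1 : ∀ j : ZMod p, ∑ i, phi (a i) j = d * ν j) :
    2 * (Finset.univ.filter fun i => a i ≠ 0).card ≤ d * m := by
  classical
  have h2 : ∑ i, (Finset.univ.filter fun k => a i k ≠ 0).card = d * m := by
    simp_rw [← sum_phi_erase_zero]
    rw [Finset.sum_comm, ← hνm, Finset.mul_sum]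
    exact Finset.sum_congr rfl fun j _ => h1 j
  calc 2 * (Finset.univ.filter fun i => a i ≠ 0).card
      = ∑ i ∈ Finset.univ.filter (fun i => a i ≠ 0), 2 := by simp [mul_comm]
    _ ≤ ∑ i ∈ Finset.univ.filter (fun i => a i ≠ 0),
          (Finset.univ.filter fun k => a i k ≠ 0).card :=
        Finset.sum_le_sum fun i hi => two_le_card_ne_zero _ (h0 i) (by simpa using hi)
    _ ≤ ∑ i, (Finset.univ.filter fun k => a i k ≠ 0).card :=
        Finset.sum_le_sum_of_subset (Finset.filter_subset _ _)
    _ = d * m := h2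

lemma exists_cover {α : Type*} [Nonempty α] {K : ℕ} (s : Finset α) (hs : s.card ≤ K) :
    ∃ f : Fin K → α, ∀ x ∈ s, ∃ k, f k = x := by
  obtain ⟨e⟩ : Nonempty (s ↪ Fin K) :=
    Function.Embedding.nonempty_of_card_le (by simpa using hs)
  exact ⟨Function.extend e Subtype.val fun _ => Classical.arbitrary α,
    fun x hx => ⟨e ⟨x, hx⟩, e.injective.extend_apply _ _ _⟩⟩

/-- Tuples of zero-sum vectors with at most `K` nonzero rows inject into sequences of `K` pairs
(row index, row without its first coordinate). -/
lemma card_tuples_le {e p n K : ℕ} [NeZero p] [NeZero n]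
    (P : (Fin n → Fin (e + 1) → ZMod p) → Prop)
    (h0 : ∀ a, P a → ∀ i, ∑ k, a i k = 0)
    (hK : ∀ a, P a → (Finset.univ.filter fun i => a i ≠ 0).card ≤ K) :
    Nat.card {a // P a} ≤ (n * p ^ e) ^ K := by
  classical
  choose f hf using fun a : {a // P a} => exists_cover _ (hK a.1 a.2)
  let F : {a // P a} → Fin K → Fin n × (Fin e → ZMod p) :=
    fun a k => (f a k, Fin.tail (a.1 (f a k)))
  have hF : Function.Injective F := by
    intro a b hab
    have hfab : f a = f b := funext fun k => congrArg Prod.fst (congrFun hab k)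
    have hrow : ∀ k, a.1 (f a k) = b.1 (f a k) := by
      intro k
      have ht : Fin.tail (a.1 (f a k)) = Fin.tail (b.1 (f a k)) := by
        have := congrArg Prod.snd (congrFun hab k)
        simpa [F, ← hfab] using this
      have ha := h0 _ a.2 (f a k)
      have hb := h0 _ b.2 (f a k)
      rw [Fin.sum_univ_succ] at ha hb
      have hs : ∀ i : Fin e, a.1 (f a k) i.succ = b.1 (f a k) i.succ := fun i => congrFun ht i
      simp_rw [hs] at ha
      funext i
      refine Fin.cases ?_ hs i
      exact add_right_cancel (ha.trans hb.symm)
    apply Subtype.ext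
    funext i
    by_cases hi : ∃ k, f a k = i
    · obtain ⟨k, rfl⟩ := hi
      exact hrow k
    · have h1 : a.1 i = 0 := by
        by_contra h
        exact hi (hf a i (by simpa using h))
      have h2 : b.1 i = 0 := by
        by_contra h
        exact hi (hfab ▸ hf b i (by simpa using h))
      rw [h1, h2]
  refine (Nat.card_le_card_of_injective F hF).trans_eq ?_
  simp [Nat.card_eq_fintype_card, ZMod.card]

/-- **path counting bound.** Let `d ≥ 3`, `p` prime, `m ≤ n`, and let
`(n_j)_{j ∈ F_p}` be nonnegative integers with `n_0 = n - m` and `∑_{j ≠ 0} n_j = m`. Then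
the number of `n`-tuples of elements of `T_{d,p}` whose counting vectors sum to `(d·n_j)_j`
is at most `(p^{d-1}·n)^{dm/2}`. -/
theorem stmt14 (d p n m : ℕ) (hd : 3 ≤ d) [Fact p.Prime] (hm : m ≤ n)
    (ν : ZMod p → ℕ) (hν0 : ν 0 = n - m)
    (hνm : ∑ j ∈ Finset.univ.erase (0 : ZMod p), ν j = m) :
    (Nat.card {a : Fin n → Fin d → ZMod p //
        (∀ i, ∑ k, a i k = 0) ∧ ∀ j : ZMod p, ∑ i, phi (a i) j = d * ν j} : ℝ)
      ≤ ((p : ℝ) ^ (d - 1) * n) ^ ((d * m : ℝ) / 2) := by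
  obtain ⟨e, rfl⟩ : ∃ e, d = e + 1 := ⟨d - 1, by omega⟩
  rcases Nat.eq_zero_or_pos n with rfl | hn
  · obtain rfl : m = 0 := by omega
    -- Now the right-hand side is `0 ^ 0 = 1`, and there is only the empty tuple.
    have hone := Finite.card_le_one_iff_subsingleton.mpr (inferInstance : Subsingleton
      {a : Fin 0 → Fin (e + 1) → ZMod p //
        (∀ i, ∑ k, a i k = 0) ∧ ∀ j : ZMod p, ∑ i, phi (a i) j = (e + 1) * ν j})
    have hr : ((p : ℝ) ^ (e + 1 - 1) * (0 : ℕ)) ^ ((((e + 1 : ℕ) : ℝ) * (0 : ℕ)) / 2) = 1 := by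
      simp
    rw [hr]
    exact_mod_cast hone
  have : NeZero n := ⟨hn.ne'⟩
  have hcard := card_tuples_le (K := (e + 1) * m / 2)
    (fun a : Fin n → Fin (e + 1) → ZMod p =>
      (∀ i, ∑ k, a i k = 0) ∧ ∀ j : ZMod p, ∑ i, phi (a i) j = (e + 1) * ν j)
    (fun a ha => ha.1)
    (fun a ha => by
      have := two_mul_card_support_le ν hνm a ha.1 ha.2
      omega)
  have hbase : (1 : ℝ) ≤ (p : ℝ) ^ (e + 1 - 1) * n := by
    have : 1 ≤ p ^ (e + 1 - 1) * n :=
      Nat.mul_pos (pow_pos (Fact.out : p.Prime).pos _) hn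
    exact_mod_cast this
  calc _ ≤ (((n * p ^ e) ^ ((e + 1) * m / 2) : ℕ) : ℝ) := by exact_mod_cast hcard
    _ = ((p : ℝ) ^ (e + 1 - 1) * n) ^ (((e + 1) * m / 2 : ℕ) : ℝ) := by
        rw [Real.rpow_natCast]
        push_cast
        rw [mul_comm]
    _ ≤ _ := by
        refine Real.rpow_le_rpow_of_exponent_le hbase ?_
        simpa using Nat.cast_div_le (α := ℝ) (m := (e + 1) * m) (n := 2)
end
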